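/- Let k, m, n be positive integers with m ≤ k ≤ n and let w ∈ Sₙ. Then in Hₙ, 𝔖_w · e_m(x₁,…,x_k) = Σ_{w′} 𝔖_{w′}, where e_m(x₁,…,x_k) is the elementary symmetric polynomial of degree m in x₁,…,x_k and the sum is over all w′ ∈ Sₙ with w →_{c[k,m]} w′. -/

import Mathlib

open Equiv MvPolynomial

attribute [local instance] Classical.propDecidable

namespace SchubertPieri

/-- Position `j ∈ {1,…,N}` (1-indexed) as an element of `Fin N` (0-indexed). -/
def pos (N : ℕ) [NeZero N] (j : ℕ) : Fin N :=
  ⟨(j - 1) % N, Nat.mod_lt _ (Nat.pos_of_ne_zero (NeZero.ne N))⟩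

/-- The transposition `t_{a,b}` interchanging positions `a` and `b` (1-indexed). -/
def t (N : ℕ) [NeZero N] (a b : ℕ) : Equiv.Perm (Fin N) :=
  Equiv.swap (pos N a) (pos N b)

/-- The value `w(j)` for `j ∈ {1,…,N}` (1-indexed). -/
def val {N : ℕ} [NeZero N] (w : Equiv.Perm (Fin N)) (j : ℕ) : ℕ :=
  (w (pos N j) : ℕ) + 1

/-- The length of `w`: its number of inversions. -/
def len {N : ℕ} (w : Equiv.Perm (Fin N)) : ℕ :=
  (Finset.univ.filter fun p : Fin N × Fin N => p.1 < p.2 ∧ w p.2 < w p.1).card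

/-- The longest permutation `w₀ : j ↦ N+1-j`. -/
def w0 (N : ℕ) : Equiv.Perm (Fin N) :=
  ⟨Fin.rev, Fin.rev, Fin.rev_rev, Fin.rev_rev⟩

/-- The product `t_{a 0, b 0} ⋯ t_{a (i-1), b (i-1)}`. -/
def tProd (N : ℕ) [NeZero N] (a b : ℕ → ℕ) (i : ℕ) : Equiv.Perm (Fin N) :=
  ((List.range i).map fun j => t N (a j) (b j)).prod

/-- `r[k,m] = t_{k,k+1} t_{k,k+2} ⋯ t_{k,k+m}`, the (m+1)-cycle with
`r[k,m](k) = k+m` and `r[k,m](j) = j-1` for `k+1 ≤ j ≤ k+m`. -/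
def rPerm (N k m : ℕ) [NeZero N] : Equiv.Perm (Fin N) :=
  ((List.range m).map fun i => t N k (k + 1 + i)).prod

/-- `c[k,m] = t_{k,k+1} t_{k-1,k+1} ⋯ t_{k-m+1,k+1}`, the (m+1)-cycle with
`c[k,m](j) = j+1` for `k-m+1 ≤ j ≤ k` and `c[k,m](k+1) = k-m+1`. -/
def cPerm (N k m : ℕ) [NeZero N] : Equiv.Perm (Fin N) :=
  ((List.range m).map fun i => t N (k - i) (k + 1)).prod

/-- The conditions that `aᵢ ≤ k < bᵢ` (with all indices in `{1,…,N}`) and that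
`ℓ(w t_{a₁ b₁} ⋯ t_{aᵢ bᵢ}) = ℓ(w) + i` for `1 ≤ i ≤ m`. -/
def StepOK (N k m : ℕ) [NeZero N] (w : Equiv.Perm (Fin N)) (a b : ℕ → ℕ) : Prop :=
  (∀ i, i < m → 1 ≤ a i ∧ a i ≤ k ∧ k < b i ∧ b i ≤ N) ∧
  (∀ i, i ≤ m → len (w * tProd N a b i) = len w + i)

/-- `w →_{r[k,m]} w'`. -/
def RelR (N k m : ℕ) [NeZero N] (w w' : Equiv.Perm (Fin N)) : Prop :=
  ∃ a b : ℕ → ℕ, StepOK N k m w a b ∧ w' = w * tProd N a b m ∧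
    (∀ i j, i < m → j < m → i ≠ j → b i ≠ b j)

/-- `w →_{c[k,m]} w'`. -/
def RelC (N k m : ℕ) [NeZero N] (w w' : Equiv.Perm (Fin N)) : Prop :=
  ∃ a b : ℕ → ℕ, StepOK N k m w a b ∧ w' = w * tProd N a b m ∧
    (∀ i j, i < m → j < m → i ≠ j → a i ≠ a j)

/-- The divided difference operator `∂ᵢ f = (f - sᵢ·f)/(xᵢ - xᵢ₊₁)` (1-indexed `i`);
the quotient is exact, and is recovered here as the (unique) witness of divisibility. -/
noncomputable def divDiff {N : ℕ} [NeZero N] (i : ℕ) (f : MvPolynomial (Fin N) ℤ) :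
    MvPolynomial (Fin N) ℤ :=
  if h : (X (pos N i) - X (pos N (i + 1))) ∣ (f - rename (⇑(t N i (i + 1))) f) then
    h.choose
  else 0

/-- `∂_{a₁} ∘ ⋯ ∘ ∂_{a_p}` applied to `f`, for a word `l = [a₁,…,a_p]`. -/
noncomputable def divDiffWord {N : ℕ} [NeZero N] (l : List ℕ) (f : MvPolynomial (Fin N) ℤ) :
    MvPolynomial (Fin N) ℤ :=
  l.foldr divDiff f

/-- Auxiliary: produce a reduced word for `w` by repeatedly removing a descent. -/
def redWordAux (N : ℕ) [NeZero N] : ℕ → Equiv.Perm (Fin N) → List ℕ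
  | 0, _ => []
  | fuel + 1, w =>
    match ((List.range (N - 1)).map (· + 1)).find? (fun i => decide (val w (i + 1) < val w i)) with
    | none => []
    | some i => redWordAux N fuel (w * t N i (i + 1)) ++ [i]

/-- A canonical reduced word `(a₁,…,a_p)` for `w`, i.e. `w = s_{a₁} ⋯ s_{a_p}` with `p = ℓ(w)`. -/
def redWord (N : ℕ) [NeZero N] (w : Equiv.Perm (Fin N)) : List ℕ :=
  redWordAux N (N * N) w

/-- The staircase monomial `x₁^{N-1} x₂^{N-2} ⋯ x_{N-1}`. -/
noncomputable def staircase (N : ℕ) : MvPolynomial (Fin N) ℤ :=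
  ∏ i : Fin N, X i ^ (N - 1 - (i : ℕ))

/-- The Schubert polynomial `𝔖_w = ∂_{w⁻¹w₀}(x₁^{N-1} ⋯ x_{N-1})`. -/
noncomputable def schubertPoly (N : ℕ) [NeZero N] (w : Equiv.Perm (Fin N)) :
    MvPolynomial (Fin N) ℤ :=
  divDiffWord (redWord N (w⁻¹ * w0 N)) (staircase N)

/-- The ideal of `Rₙ` generated by the symmetric polynomials with zero constant term. -/
noncomputable def symIdeal (N : ℕ) : Ideal (MvPolynomial (Fin N) ℤ) :=
  Ideal.span {f : MvPolynomial (Fin N) ℤ | f.IsSymmetric ∧ constantCoeff f = 0}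

/-- The ring `Hₙ = Rₙ/𝒮`. -/
abbrev HRing (N : ℕ) := MvPolynomial (Fin N) ℤ ⧸ symIdeal N

/-- The class of the Schubert polynomial `𝔖_w` in `Hₙ`. -/
noncomputable def SS (N : ℕ) [NeZero N] (w : Equiv.Perm (Fin N)) : HRing N :=
  Ideal.Quotient.mk (symIdeal N) (schubertPoly N w)

/-- The complete homogeneous symmetric polynomial of degree `m` in `x₁,…,x_k`. -/
noncomputable def hPoly (N k m : ℕ) : MvPolynomial (Fin N) ℤ :=
  ∑ s ∈ (Finset.univ.filter fun i : Fin N => (i : ℕ) < k).sym m,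
    (Multiset.map X (s : Multiset (Fin N))).prod

/-- The elementary symmetric polynomial of degree `m` in `x₁,…,x_k`. -/
noncomputable def ePoly (N k m : ℕ) : MvPolynomial (Fin N) ℤ :=
  ∑ s ∈ (Finset.univ.filter fun i : Fin N => (i : ℕ) < k).powersetCard m, ∏ i ∈ s, X i

/-- Covering relation of the `k`-Bruhat order. -/
def kCover (N k : ℕ) [NeZero N] (w w' : Equiv.Perm (Fin N)) : Prop :=
  ∃ a b : ℕ, 1 ≤ a ∧ a ≤ k ∧ k < b ∧ b ≤ N ∧ w' = w * t N a b ∧ len w' = len w + 1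

/-- The (strict) `k`-Bruhat order `<ₖ`. -/
def kBruhat (N k : ℕ) [NeZero N] : Equiv.Perm (Fin N) → Equiv.Perm (Fin N) → Prop :=
  Relation.TransGen (kCover N k)

/-- The label `w⁽ⁱ⁺¹⁾(a_{i+1})` (0-indexed `i`) of the `(i+1)`-st step of a path. -/
def label {N : ℕ} [NeZero N] (w : Equiv.Perm (Fin N)) (a b : ℕ → ℕ) (i : ℕ) : ℕ :=
  val (w * tProd N a b (i + 1)) (a i)

/-- `(a,b)` encodes a path of length `m` in the `k`-Bruhat order from `w` to `w'`
(normalized so that `a i = b i = 0` for `i ≥ m`, making the encoding unique). -/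
def PathWit (N k m : ℕ) [NeZero N] (w w' : Equiv.Perm (Fin N))
    (ab : (ℕ → ℕ) × (ℕ → ℕ)) : Prop :=
  StepOK N k m w ab.1 ab.2 ∧ w' = w * tProd N ab.1 ab.2 m ∧
    ∀ i, m ≤ i → ab.1 i = 0 ∧ ab.2 i = 0

/-- Paths of length `m` in the `k`-Bruhat order from `w` to `w'` with strictly
increasing labels. -/
def IncPaths (N k m : ℕ) [NeZero N] (w w' : Equiv.Perm (Fin N)) :
    Set ((ℕ → ℕ) × (ℕ → ℕ)) :=
  {ab | PathWit N k m w w' ab ∧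
    ∀ i j, i < j → j < m → label w ab.1 ab.2 i < label w ab.1 ab.2 j}

/-- Paths of length `m` in the `k`-Bruhat order from `w` to `w'` with strictly
decreasing labels. -/
def DecPaths (N k m : ℕ) [NeZero N] (w w' : Equiv.Perm (Fin N)) :
    Set ((ℕ → ℕ) × (ℕ → ℕ)) :=
  {ab | PathWit N k m w w' ab ∧
    ∀ i j, i < j → j < m → label w ab.1 ab.2 j < label w ab.1 ab.2 i}


/-- The cycle `(x₁ x₂ … x_r)` (sending `x₁ ↦ x₂ ↦ ⋯ ↦ x_r ↦ x₁`), as a product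
of transpositions. -/
def cycleList (N : ℕ) [NeZero N] (l : List ℕ) : Equiv.Perm (Fin N) :=
  ((l.zip l.tail).map fun p => t N p.1 p.2).prod

/-- The Grassmannian permutation `h[k;p,q]` of descent `k` and hook shape `(p,1^{q-1})`:
the `(p+q)`-cycle `(k-q+1  k-q+2 … k  k+p  k+p-1 … k+1)`. -/
def hookPerm (N k p q : ℕ) [NeZero N] : Equiv.Perm (Fin N) :=
  cycleList N (((List.range q).map fun i => k - q + 1 + i) ++
    ((List.range p).reverse.map fun i => k + 1 + i))

/-- `w|ₚ ∈ S_{N-1}`: delete row `p` and column `w(p)` from the permutation matrix of `w`. -/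
def drop {N : ℕ} (w : Equiv.Perm (Fin (N + 1))) (p : Fin (N + 1)) : Equiv.Perm (Fin N) :=
  Equiv.removeNone (((finSuccEquiv' p).symm.trans (w : Fin (N + 1) ≃ Fin (N + 1))).trans
    (finSuccEquiv' (w p)))

/-- `lam` is a partition with at most `k` parts (1-indexed parts `lam 1 ≥ lam 2 ≥ ⋯`,
normalized by `lam 0 = 0`). -/
def IsPartFun (k : ℕ) (lam : ℕ → ℕ) : Prop :=
  lam 0 = 0 ∧ (∀ j, 1 ≤ j → lam (j + 1) ≤ lam j) ∧ ∀ j, k < j → lam j = 0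

/-- `h_d(x₁,…,x_k)` for an integer `d`, with `h_d = 0` for `d < 0`. -/
noncomputable def hPolyZ (N k : ℕ) (d : ℤ) : MvPolynomial (Fin N) ℤ :=
  if 0 ≤ d then hPoly N k d.toNat else 0

/-- The Schur polynomial `s_λ(x₁,…,x_k)`, via the Jacobi–Trudi determinant
`det(h_{λᵢ+j-i})_{1 ≤ i,j ≤ k}`. -/
noncomputable def schurPoly (N k : ℕ) (lam : ℕ → ℕ) : MvPolynomial (Fin N) ℤ :=
  (Matrix.of fun i j : Fin k =>
    hPolyZ N k ((lam ((i : ℕ) + 1) : ℤ) + (j : ℕ) - (i : ℕ))).det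

/-- `r_j = #{i : aᵢ = j}` (with `i` ranging over `0,…,m-1`, 0-indexed). -/
def rJ (a : ℕ → ℕ) (m j : ℕ) : ℕ := ((Finset.range m).filter fun i => a i = j).card

/-- `μ_j = r_{j+1} + ⋯ + r_k`. -/
def muJ (a : ℕ → ℕ) (m k j : ℕ) : ℕ :=
  if j = 0 then 0 else ∑ j' ∈ Finset.Icc (j + 1) k, rJ a m j'

/-- `λ_j = μ_j + r_j`. -/
def lamJ (a : ℕ → ℕ) (m k j : ℕ) : ℕ :=
  if j = 0 then 0 else muJ a m k j + rJ a m j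

/-- `d_j = #{i : bᵢ = N+1-j}` (with `i` ranging over `0,…,m-1`, 0-indexed). -/
def dJ (b : ℕ → ℕ) (m N j : ℕ) : ℕ :=
  ((Finset.range m).filter fun i => b i = N + 1 - j).card

/-- `μ′_j = d_{j+1} + ⋯ + d_{N-k}`. -/
def muJ' (b : ℕ → ℕ) (m N k j : ℕ) : ℕ :=
  if j = 0 then 0 else ∑ j' ∈ Finset.Icc (j + 1) (N - k), dJ b m N j'

/-- `λ′_j = μ′_j + d_j`. -/
def lamJ' (b : ℕ → ℕ) (m N k j : ℕ) : ℕ :=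
  if j = 0 then 0 else muJ' b m N k j + dJ b m N j

/-- The conjugate (transpose) partition: `νᵗ_j = #{i : νᵢ ≥ j}`, for `ν` with at
most `k` parts. -/
def conjPart (k : ℕ) (nu : ℕ → ℕ) (j : ℕ) : ℕ :=
  if j = 0 then 0 else ((Finset.Icc 1 k).filter fun i => j ≤ nu i).card

/-- `wv` is the Grassmannian permutation of descent `k` and shape `nu`:
`wv(j) = j + ν_{k+1-j}` for `1 ≤ j ≤ k`, and `wv` is increasing on `{k+1,…,N}`. -/
def IsGrassOf (N k : ℕ) [NeZero N] (nu : ℕ → ℕ) (wv : Equiv.Perm (Fin N)) : Prop :=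
  (∀ j, 1 ≤ j → j ≤ k → val wv j = j + nu (k + 1 - j)) ∧
  (∀ j, k < j → j < N → val wv j < val wv (j + 1))

/-- Paths of length `m` in the `k`-Bruhat order from `w` to `w'` whose labels
increase strictly for the first `p` steps and decrease strictly thereafter
(positions `p, p+1, …, m` being decreasing, 1-indexed). -/
def IncDecPaths (N k m p : ℕ) [NeZero N] (w w' : Equiv.Perm (Fin N)) :
    Set ((ℕ → ℕ) × (ℕ → ℕ)) :=
  {ab | PathWit N k m w w' ab ∧
    (∀ i j, i < j → j < p → label w ab.1 ab.2 i < label w ab.1 ab.2 j) ∧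
    (∀ i j, p - 1 ≤ i → i < j → j < m → label w ab.1 ab.2 j < label w ab.1 ab.2 i)}

/-- Paths of length `m` in the `k`-Bruhat order from `w` to `w'` whose labels
decrease strictly for the first `q` steps and increase strictly thereafter. -/
def DecIncPaths (N k m q : ℕ) [NeZero N] (w w' : Equiv.Perm (Fin N)) :
    Set ((ℕ → ℕ) × (ℕ → ℕ)) :=
  {ab | PathWit N k m w w' ab ∧
    (∀ i j, i < j → j < q → label w ab.1 ab.2 j < label w ab.1 ab.2 i) ∧
    (∀ i j, q - 1 ≤ i → i < j → j < m → label w ab.1 ab.2 i < label w ab.1 ab.2 j)}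

/-!
By `e_{m+1}(x₁,…,x_j) = e_{m+1}(x₁,…,x_{j-1}) + x_j e_m(x₁,…,x_{j-1})`, multiplication by `e_m` is
known once multiplication by each `x_j` is. Monk's rule says that `x_j` acts on Schubert polynomials
in `Hₙ` as the operator `w ↦ ∑_{d>j} w t_{j,d} - ∑_{d<j} w t_{d,j}`, summed over the covers of `w`.
To see this, note that the defect between the two operations is compatible with divided differences,
so that it is enough to treat `w₀`. There the operator vanishes, and so does `x_j` times the
staircase monomial, because `∏ (T - x_i) = T^N` over `Hₙ`.

For sets of positions `I < j < J`, the operators `E_m(I, J)` that sum over the ends of the chains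
with `m` covers `t_{a,b}`, `a ∈ I`, `b ∈ J`, no `a` repeated, satisfy
`E_{m+1}(I ∪ {j}, J) = E_{m+1}(I, {j} ∪ J) + θ_j E_m(I, {j} ∪ J)`, where `θ_j` is the operator of
Monk's rule restricted to `I ∪ J`. For `I = {1,…,j-1}` and `J = {j+1,…,N}` this is the recursion of
the elementary symmetric polynomials. The reason behind it is the relation
`c_{jb} c_{aj} = c_{aj} c_{ab} + c_{ab} c_{jb}` between the cover operators `c_{ab}`, `a < j < b`.
-/

section Length

theorem swap_lt_swap_of_covBy {α : Type*} [LinearOrder α] [DecidableEq α] {a b x y : α}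
    (hab : a ⋖ b) (hxy : x < y) (hne : (x, y) ≠ (a, b)) : swap a b x < swap a b y := by
  have hlt := hab.lt
  have hx : x < b → x ≤ a := hab.le_of_lt
  have hy : a < y → b ≤ y := hab.ge_of_gt
  simp only [swap_apply_def]
  grind

variable {N : ℕ} {w : Perm (Fin N)} {a b : Fin N}

/-- The inversions of `w`, as pairs of positions. -/
def inversions (w : Perm (Fin N)) : Finset (Fin N × Fin N) :=
  Finset.univ.filter fun p => p.1 < p.2 ∧ w p.2 < w p.1

theorem mem_inversions {p : Fin N × Fin N} : p ∈ inversions w ↔ p.1 < p.2 ∧ w p.2 < w p.1 := by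
  simp [inversions]

theorem card_inversions : (inversions w).card = len w := by
  simp only [inversions, len]

theorem inversions_mul_swap_of_covBy (hab : a ⋖ b) (hw : w a < w b) :
    inversions (w * swap a b) =
      insert (a, b) ((inversions w).map ((swap a b).prodCongr (swap a b)).toEmbedding) := by
  ext ⟨x, y⟩
  by_cases hxy : (x, y) = (a, b)
  · obtain ⟨rfl, rfl⟩ := Prod.mk.inj hxy
    simp [mem_inversions, hab.lt, hw]
  · have hswap (hinv : w (swap a b y) < w (swap a b x)) : x < y ↔ swap a b x < swap a b y := by
      refine ⟨fun h => swap_lt_swap_of_covBy hab h hxy, fun h => ?_⟩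
      have hne : (swap a b x, swap a b y) ≠ (a, b) := by grind
      simpa using swap_lt_swap_of_covBy hab h hne
    simpa [mem_inversions, hxy, Finset.mem_map_equiv] using hswap

theorem len_mul_swap_of_covBy (hab : a ⋖ b) (hw : w a < w b) :
    len (w * swap a b) = len w + 1 := by
  have hmem : (a, b) ∉ (inversions w).map ((swap a b).prodCongr (swap a b)).toEmbedding := by
    simp [Finset.mem_map_equiv, mem_inversions, hab.lt.le]
  rw [← card_inversions, inversions_mul_swap_of_covBy hab hw, Finset.card_insert_of_notMem hmem,
    Finset.card_map, card_inversions]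

theorem len_eq_len_mul_swap_add_one_of_covBy (hab : a ⋖ b) (hw : w b < w a) :
    len w = len (w * swap a b) + 1 := by
  simpa [mul_assoc] using len_mul_swap_of_covBy (w := w * swap a b) hab (by simpa using hw)

theorem len_le_len_mul_swap_add_one (hab : a ⋖ b) : len w ≤ len (w * swap a b) + 1 := by
  rcases lt_or_gt_of_ne (w.injective.ne hab.ne) with hw | hw
  · rw [len_mul_swap_of_covBy hab hw]
    omega
  · exact (len_eq_len_mul_swap_add_one_of_covBy hab hw).le

-- With `s = (a c)` and `a ⋖ c < b`, this is the factorisation `(a b) = s (c b) s`.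
theorem len_lt_len_mul_swap (hab : a < b) (hw : w a < w b) : len w < len (w * swap a b) := by
  induction transGen_covBy_of_lt hab using Relation.TransGen.head_induction_on generalizing w with
  | single hcov => rw [len_mul_swap_of_covBy hcov hw]; exact Nat.lt_succ_self _
  | @head a c hac hcb ih =>
    have hcb := lt_iff_transGen_covBy.2 hcb
    have hswap : w * swap a b = w * swap a c * swap c b * swap a c := by
      rw [mul_assoc, mul_assoc, swap_comm a c, swap_comm c b, ← mul_assoc (swap c a),
        swap_mul_swap_mul_swap hcb.ne' (hac.lt.trans hcb).ne']
    rw [hswap]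
    set u := w * swap a c with hu
    have hua : u a = w c := by simp [hu]
    have huc : u c = w a := by simp [hu]
    have hub : u b = w b := by simp [hu, swap_apply_of_ne_of_ne, (hac.lt.trans hcb).ne', hcb.ne']
    have hstep : len u < len (u * swap c b) := ih hcb (by rwa [huc, hub])
    rcases lt_or_gt_of_ne (w.injective.ne hac.ne) with hwac | hwac
    · have hlen : len u = len w + 1 := len_mul_swap_of_covBy hac hwac
      have := len_le_len_mul_swap_add_one (w := u * swap c b) hac
      omega
    · have hlen : len w = len u + 1 := len_eq_len_mul_swap_add_one_of_covBy hac hwac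
      have hlt : (u * swap c b) a < (u * swap c b) c := by
        have hne : swap c b a = a := swap_apply_of_ne_of_ne hac.ne (hac.lt.trans hcb).ne
        simpa [hne, hua, hub] using hwac.trans hw
      have := len_mul_swap_of_covBy hac hlt
      omega

theorem len_lt_len_mul_swap_iff (hab : a < b) : len w < len (w * swap a b) ↔ w a < w b := by
  refine ⟨fun h => ?_, len_lt_len_mul_swap hab⟩
  by_contra hw
  have hlt : w b < w a := lt_of_le_of_ne (not_lt.1 hw) (w.injective.ne hab.ne')
  have := len_lt_len_mul_swap (w := w * swap a b) hab (by simpa using hlt)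
  rw [mul_assoc, swap_mul_self, mul_one] at this
  exact this.not_gt h

theorem len_le : len w ≤ N * N := by
  simpa [card_inversions] using Finset.card_le_univ (inversions w)

theorem eq_one_of_forall_covBy_lt (h : ∀ a b, a ⋖ b → w a < w b) : w = 1 := by
  have hw : StrictMono w := (strictMono_iff_forall_covBy w).2 h
  have hrange : Set.range w = Set.range (id : Fin N → Fin N) := by simp [w.surjective.range_eq]
  exact DFunLike.coe_injective ((hw.range_inj strictMono_id).1 hrange)

theorem eq_w0_of_forall_covBy_gt (h : ∀ a b, a ⋖ b → w b < w a) : w = w0 N := by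
  have hw : w0 N * w = 1 := eq_one_of_forall_covBy_lt fun a b hab => by
    simpa [w0] using h a b hab
  have hinv : (w0 N)⁻¹ = w0 N := rfl
  rw [← hinv, eq_inv_of_mul_eq_one_right hw]

end Length

section Covers

variable {N : ℕ} {w : Perm (Fin N)} {a b c d j : Fin N}

/-- `w · t_{a,b}` covers `w` in the Bruhat order, with the positions in the order `a < b`. -/
def Covers (w : Perm (Fin N)) (a b : Fin N) : Prop :=
  a < b ∧ len (w * swap a b) = len w + 1

theorem Covers.apply_lt_apply (h : Covers w a b) : w a < w b := by
  rw [← len_lt_len_mul_swap_iff h.1, h.2]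
  exact Nat.lt_succ_self _

theorem covers_iff_of_covBy (hab : a ⋖ b) : Covers w a b ↔ w a < w b :=
  ⟨Covers.apply_lt_apply, fun hw => ⟨hab.lt, len_mul_swap_of_covBy hab hw⟩⟩

theorem covers_and_covers_iff :
    Covers w a b ∧ Covers (w * swap a b) c d ↔
      (a < b ∧ c < d ∧ w a < w b ∧ (w * swap a b) c < (w * swap a b) d) ∧
        len (w * swap a b * swap c d) = len w + 2 := by
  constructor
  · rintro ⟨hab, hcd⟩
    exact ⟨⟨hab.1, hcd.1, hab.apply_lt_apply, hcd.apply_lt_apply⟩, by rw [hcd.2, hab.2]⟩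
  · rintro ⟨⟨hab, hcd, hwab, hwcd⟩, hlen⟩
    have := len_lt_len_mul_swap hab hwab
    have := len_lt_len_mul_swap hcd hwcd
    exact ⟨⟨hab, by omega⟩, hcd, by omega⟩

theorem swap_mul_swap_comm (hac : a ≠ c) (had : a ≠ d) (hbc : b ≠ c) (hbd : b ≠ d) :
    swap a b * swap c d = swap c d * swap a b := by
  rw [mul_swap_eq_swap_mul, swap_apply_of_ne_of_ne hac.symm hbc.symm,
    swap_apply_of_ne_of_ne had.symm hbd.symm]

theorem swap_mul_swap_left (hba : b ≠ a) (hbj : b ≠ j) :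
    swap a b * swap a j = swap a j * swap j b := by
  rw [mul_swap_eq_swap_mul (swap a j), swap_apply_right, swap_apply_of_ne_of_ne hba hbj]

theorem swap_mul_swap_right (haj : a ≠ j) (hab : a ≠ b) :
    swap j b * swap a b = swap a j * swap j b := by
  rw [mul_swap_eq_swap_mul (swap j b), swap_apply_right, swap_apply_of_ne_of_ne haj hab]

theorem covers_and_covers_comm (hac : a ≠ c) (had : a ≠ d) (hbc : b ≠ c) (hbd : b ≠ d) :
    Covers w a b ∧ Covers (w * swap a b) c d ↔ Covers w c d ∧ Covers (w * swap c d) a b := by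
  rw [covers_and_covers_iff, covers_and_covers_iff, mul_assoc, mul_assoc,
    swap_mul_swap_comm hac had hbc hbd]
  simp only [Perm.mul_apply, swap_apply_of_ne_of_ne hac had, swap_apply_of_ne_of_ne hbc hbd,
    swap_apply_of_ne_of_ne hac.symm hbc.symm, swap_apply_of_ne_of_ne had.symm hbd.symm]
  tauto

theorem covers_and_covers_iff_or (haj : a < j) (hjb : j < b) :
    Covers w a j ∧ Covers (w * swap a j) j b ↔
      (Covers w a b ∧ Covers (w * swap a b) a j) ∨ (Covers w j b ∧ Covers (w * swap j b) a b) := by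
  have hab := haj.trans hjb
  have hne := w.injective.ne hjb.ne
  simp only [covers_and_covers_iff, mul_assoc, swap_mul_swap_left hab.ne' hjb.ne',
    swap_mul_swap_right haj.ne hab.ne, haj, hjb, hab, Perm.mul_apply, swap_apply_left,
    swap_apply_right, swap_apply_of_ne_of_ne hab.ne' hjb.ne',
    swap_apply_of_ne_of_ne haj.ne' hjb.ne, swap_apply_of_ne_of_ne haj.ne hab.ne]
  grind

theorem covers_mul_swap_iff_of_covBy (hab : a ⋖ b) (hcd : c < d) (hne : (c, d) ≠ (a, b)) :
    w b < w a ∧ Covers (w * swap a b) c d ↔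
      Covers w (swap a b c) (swap a b d) ∧
        (w * swap (swap a b c) (swap a b d)) b < (w * swap (swap a b c) (swap a b d)) a := by
  have hlt := swap_lt_swap_of_covBy hab hcd hne
  have hconj : w * swap a b * swap c d = w * swap (swap a b c) (swap a b d) * swap a b := by
    rw [mul_assoc, mul_swap_eq_swap_mul, mul_assoc]
  have hlen : (w * swap a b) c < (w * swap a b) d ↔
      len w < len (w * swap (swap a b c) (swap a b d)) := (len_lt_len_mul_swap_iff hlt).symm
  have hlen' := len_lt_len_mul_swap_iff (w := w * swap a b) hcd
  rw [hconj] at hlen'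
  rw [Covers, Covers, hconj]
  set u := w * swap (swap a b c) (swap a b d)
  rcases lt_or_gt_of_ne (w.injective.ne hab.ne) with hw | hw <;>
    rcases lt_or_gt_of_ne (u.injective.ne hab.ne) with hu | hu
  · simp [hw.not_gt, hu.not_gt]
  · have := len_mul_swap_of_covBy hab hw
    have := len_eq_len_mul_swap_add_one_of_covBy hab hu
    simp only [hw.not_gt, hu, hcd, hlt, true_and, and_true, false_and, false_iff]
    grind
  · have := len_eq_len_mul_swap_add_one_of_covBy hab hw
    have := len_mul_swap_of_covBy hab hu
    simp only [hw, hu.not_gt, hcd, true_and, and_false, iff_false]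
    grind
  · have := len_eq_len_mul_swap_add_one_of_covBy hab hw
    have := len_eq_len_mul_swap_add_one_of_covBy hab hu
    simp only [hw, hu, hcd, hlt, true_and, and_true]
    omega

end Covers

section PartialMul

variable {G : Type*} [Group G] {P Q R : G → Prop} {s t : G}

/-- The operator on functions (read as `ℤ`-linear combinations of elements of `G`) that sends `w`
to `w * s` if `P w` holds and to `0` otherwise. -/
noncomputable def partialMul (P : G → Prop) (s : G) : Module.End ℤ (G → ℤ) where
  toFun f w := if P (w * s⁻¹) then f (w * s⁻¹) else 0
  map_add' f g := by ext w; simp only [Pi.add_apply]; split_ifs <;> simp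
  map_smul' c f := by ext w; simp only [Pi.smul_apply, RingHom.id_apply]; split_ifs <;> simp

theorem partialMul_apply (f : G → ℤ) (w : G) :
    partialMul P s f w = if P (w * s⁻¹) then f (w * s⁻¹) else 0 :=
  rfl

theorem partialMul_single [DecidableEq G] (w : G) :
    partialMul P s (Pi.single w 1) = if P w then Pi.single (w * s) 1 else 0 := by
  ext u
  rcases eq_or_ne u (w * s) with rfl | hu
  · split_ifs <;> simp_all [partialMul_apply]
  · have hne : u * s⁻¹ ≠ w := fun h => hu (mul_inv_eq_iff_eq_mul.1 h)
    split_ifs <;> simp [partialMul_apply, hu, hne]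

theorem partialMul_mul_partialMul :
    partialMul Q t * partialMul P s = partialMul (fun w => P w ∧ Q (w * s)) (s * t) := by
  ext f w
  simp only [Module.End.mul_apply, partialMul_apply, mul_inv_rev, ← mul_assoc,
    inv_mul_cancel_right]
  split_ifs <;> simp_all

theorem partialMul_eq_zero (h : ∀ w, ¬P w) : partialMul P s = 0 := by
  ext f w
  simp [partialMul_apply, h]

theorem partialMul_eq_add (h : ∀ w, P w ↔ Q w ∨ R w) (hQR : ∀ w, Q w → ¬R w) :
    partialMul P s = partialMul Q s + partialMul R s := by
  ext f w
  simp only [LinearMap.add_apply, Pi.add_apply, partialMul_apply]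
  have := h (w * s⁻¹)
  have := hQR (w * s⁻¹)
  split_ifs <;> simp_all

theorem partialMul_one_of_forall (h : ∀ w, P w) : partialMul P 1 = 1 := by
  ext f w
  simp [partialMul_apply, h]

end PartialMul

section CoverOperators

variable {N : ℕ} {a b c d j : Fin N}

/-- The operator on linear combinations of permutations that sends `w` to `w · t_{a,b}` if this
covers `w` in the Bruhat order, and to `0` otherwise. It vanishes unless `a < b`. -/
noncomputable def coverOp (a b : Fin N) : Module.End ℤ (Perm (Fin N) → ℤ) :=
  partialMul (fun w => Covers w a b) (swap a b)

/-- The operator on linear combinations of permutations that sends `w` to `w · t_{a,b}` if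
`w(a) > w(b)`, and to `0` otherwise. On Schubert polynomials it is the divided difference if
`b = a + 1`. -/
noncomputable def descentOp (a b : Fin N) : Module.End ℤ (Perm (Fin N) → ℤ) :=
  partialMul (fun w => w b < w a) (swap a b)

theorem coverOp_apply (f : Perm (Fin N) → ℤ) (w : Perm (Fin N)) :
    coverOp a b f w = if Covers (w * swap a b) a b then f (w * swap a b) else 0 := by
  rw [coverOp, partialMul_apply, swap_inv]

theorem coverOp_eq_zero (h : b ≤ a) : coverOp a b = 0 :=
  partialMul_eq_zero fun _ hw => hw.1.not_ge h

theorem coverOp_mul_comm (hac : a ≠ c) (had : a ≠ d) (hbc : b ≠ c) (hbd : b ≠ d) :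
    coverOp a b * coverOp c d = coverOp c d * coverOp a b := by
  simp only [coverOp, partialMul_mul_partialMul, covers_and_covers_comm hac had hbc hbd,
    swap_mul_swap_comm hac had hbc hbd]

theorem coverOp_braid (haj : a < j) (hjb : j < b) :
    coverOp j b * coverOp a j = coverOp a j * coverOp a b + coverOp a b * coverOp j b := by
  have hab := haj.trans hjb
  simp only [coverOp, partialMul_mul_partialMul, swap_mul_swap_left hab.ne' hjb.ne',
    swap_mul_swap_right haj.ne hab.ne]
  refine partialMul_eq_add (fun w => covers_and_covers_iff_or haj hjb) ?_
  rintro w ⟨-, hcov⟩ ⟨hcov', -⟩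
  have hlt := hcov.apply_lt_apply
  rw [Perm.mul_apply, Perm.mul_apply, swap_apply_left,
    swap_apply_of_ne_of_ne haj.ne' hjb.ne] at hlt
  exact hlt.not_gt hcov'.apply_lt_apply

theorem coverOp_mul_descentOp (hab : a ⋖ b) (h : (c, d) ≠ (a, b)) (h' : (c, d) ≠ (b, a)) :
    coverOp c d * descentOp a b = descentOp a b * coverOp (swap a b c) (swap a b d) := by
  rcases lt_or_ge c d with hcd | hcd
  · simp only [coverOp, descentOp, partialMul_mul_partialMul,
      covers_mul_swap_iff_of_covBy hab hcd h]
    rw [mul_swap_eq_swap_mul]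
  · have hswap : swap a b d ≤ swap a b c := by
      rcases hcd.eq_or_lt with rfl | hlt
      · exact le_rfl
      · exact (swap_lt_swap_of_covBy hab hlt (by grind)).le
    rw [coverOp_eq_zero hcd, coverOp_eq_zero hswap, zero_mul, mul_zero]

theorem coverOp_mul_descentOp_self (hab : a ⋖ b) :
    coverOp a b * descentOp a b + descentOp a b * coverOp a b = 1 := by
  have hsplit (w : Perm (Fin N)) : True ↔ w b < w a ∨ w a < w b := by
    simpa using (w.injective.ne hab.ne').lt_or_gt
  simp only [coverOp, descentOp, partialMul_mul_partialMul, covers_iff_of_covBy hab, swap_mul_self,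
    Perm.mul_apply, swap_apply_left, swap_apply_right, and_self]
  rw [← partialMul_eq_add hsplit fun w => lt_asymm, partialMul_one_of_forall fun _ => trivial]

end CoverOperators

section Chains

variable {N m : ℕ} {w w' : Perm (Fin N)} {I I' J J' : Finset (Fin N)} {a b j x : Fin N}

/-- `PieriChain J w I m w'` says that `w'` is reached from `w` by `m` covers `u → u · t_{a,b}` with
`a ∈ I`, `b ∈ J` and no `a` used twice: the relation `w →_{c[k,m]} w'` for general sets of
positions. -/
inductive PieriChain (J : Finset (Fin N)) (w : Perm (Fin N)) :
    Finset (Fin N) → ℕ → Perm (Fin N) → Prop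
  | refl (I : Finset (Fin N)) : PieriChain J w I 0 w
  | step {I : Finset (Fin N)} {m : ℕ} {u : Perm (Fin N)} {a b : Fin N} (ha : a ∈ I) (hb : b ∈ J)
      (hcov : Covers u a b) (hu : PieriChain J w (I.erase a) m u) :
      PieriChain J w I (m + 1) (u * swap a b)

theorem PieriChain.mono (h : PieriChain J w I m w') (hI : I ⊆ I') (hJ : J ⊆ J') :
    PieriChain J' w I' m w' := by
  induction h generalizing I' with
  | refl I => exact .refl I'
  | step ha hb hcov _ ih => exact .step (hI ha) (hJ hb) hcov (ih (Finset.erase_subset_erase _ hI))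

theorem PieriChain.apply_eq (h : PieriChain J w I m w') (hI : x ∉ I) (hJ : x ∉ J) :
    w' x = w x := by
  induction h with
  | refl I => rfl
  | step ha hb _ _ ih =>
    rw [Perm.mul_apply, swap_apply_of_ne_of_ne (ne_of_mem_of_not_mem ha hI).symm
      (ne_of_mem_of_not_mem hb hJ).symm, ih fun hx => hI (Finset.mem_of_mem_erase hx)]

theorem PieriChain.apply_eq_of_mul_swap (h : PieriChain J w (I.erase a) m (w' * swap a b))
    (ha : a ∉ J) : w' b = w a := by
  simpa using h.apply_eq (Finset.notMem_erase a I) ha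

theorem pieriChain_zero_iff : PieriChain J w I 0 w' ↔ w' = w := by
  refine ⟨?_, ?_⟩
  · rintro ⟨⟩
    rfl
  · rintro rfl
    exact .refl I

theorem not_pieriChain_empty : ¬PieriChain ∅ w I (m + 1) w' := by
  rintro (_ | ⟨_, hb, _, _⟩)
  simp at hb

/-- The value at `j` only decreases along such a chain, so it stays below the value that a step at
`a` would leave there. -/
theorem PieriChain.erase_of_apply_lt (h : PieriChain {j} w I m w') (hlt : w' a < w' j) :
    PieriChain {j} w (I.erase a) m w' := by
  induction h with
  | refl I => exact .refl _
  | @step I m u c b hc hb hcov _ ih =>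
    obtain rfl := Finset.mem_singleton.1 hb
    have hclt := hcov.apply_lt_apply
    have hca : c ≠ a := by
      rintro rfl
      rw [Perm.mul_apply, Perm.mul_apply, swap_apply_left, swap_apply_right] at hlt
      exact hlt.not_gt hclt
    have hab : a ≠ b := by
      rintro rfl
      exact lt_irrefl _ hlt
    rw [Perm.mul_apply, Perm.mul_apply, swap_apply_of_ne_of_ne hca.symm hab,
      swap_apply_right] at hlt
    refine .step (Finset.mem_erase.2 ⟨hca, hc⟩) hb hcov ?_
    rw [Finset.erase_right_comm]
    exact ih (hlt.trans hclt)

theorem PieriChain.of_insert (hIJ : Disjoint I J) (hbI : b ∉ I) (hbJ : b ∉ J)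
    (h : PieriChain (insert b J) w I (m + 1) w') :
    PieriChain J w I (m + 1) w' ∨
      ∃ a ∈ I, Covers (w' * swap a b) a b ∧
        PieriChain (insert b J) w (I.erase a) m (w' * swap a b) := by
  induction m generalizing I w' with
  | zero =>
    obtain _ | @⟨_, _, u, a, c, ha, hc, hcov, hu⟩ := h
    rcases Finset.mem_insert.1 hc with rfl | hcJ
    · exact .inr ⟨a, ha, by simpa [mul_assoc] using hcov, by simpa [mul_assoc] using hu⟩
    · exact .inl (.step ha hcJ hcov (pieriChain_zero_iff.1 hu ▸ .refl _))
  | succ m ih =>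
    obtain _ | @⟨_, _, u, a, c, ha, hc, hcov, hu⟩ := h
    rcases Finset.mem_insert.1 hc with rfl | hcJ
    · exact .inr ⟨a, ha, by simpa [mul_assoc] using hcov, by simpa [mul_assoc] using hu⟩
    have herase := Finset.erase_subset a I
    rcases ih (hIJ.mono_left herase) (fun h => hbI (herase h)) hu with h | ⟨d, hd, hcov', h⟩
    · exact .inl (.step ha hcJ hcov h)
    · -- The last two covers use disjoint positions, so they can be exchanged.
      obtain ⟨hda, hdI⟩ := Finset.mem_erase.1 hd
      have hne {x y : Fin N} (hx : x ∈ I) (hy : y ∈ J) : x ≠ y := hIJ.forall_ne_finset hx hy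
      have hab : a ≠ b := ne_of_mem_of_not_mem ha hbI
      have hbc : b ≠ c := (ne_of_mem_of_not_mem hcJ hbJ).symm
      have hback : u * swap d b * swap d b = u := by simp [mul_assoc]
      obtain ⟨hcov₁, hcov₂⟩ := (covers_and_covers_comm hda (hne hdI hcJ) hab.symm hbc).1
        ⟨hcov', by rwa [hback]⟩
      have hw' : u * swap a c * swap d b = u * swap d b * swap a c := by
        rw [mul_assoc, mul_assoc, swap_mul_swap_comm hda (hne hdI hcJ) hab.symm hbc]
      refine .inr ⟨d, hdI, by rwa [hw'], ?_⟩
      rw [hw']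
      refine .step (Finset.mem_erase.2 ⟨hda.symm, ha⟩) hc hcov₁ ?_
      rwa [Finset.erase_right_comm]

theorem pieriChain_insert_iff (hIJ : Disjoint I J) (hbI : b ∉ I) (hbJ : b ∉ J) :
    PieriChain (insert b J) w I (m + 1) w' ↔
      PieriChain J w I (m + 1) w' ∨
      ∃ a ∈ I, Covers (w' * swap a b) a b ∧
        PieriChain (insert b J) w (I.erase a) m (w' * swap a b) := by
  refine ⟨PieriChain.of_insert hIJ hbI hbJ, ?_⟩
  rintro (h | ⟨a, ha, hcov, h⟩)
  · exact h.mono subset_rfl (Finset.subset_insert b J)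
  · simpa [mul_assoc] using PieriChain.step ha (Finset.mem_insert_self b J) hcov h

end Chains

section ChainOperators

variable {N : ℕ} {m : ℕ} {I J : Finset (Fin N)} {a b j : Fin N}

/-- The operator that sends `w` to the sum of all ends of chains `PieriChain J w I m`. -/
noncomputable def chainOp (m : ℕ) (I J : Finset (Fin N)) : Module.End ℤ (Perm (Fin N) → ℤ) where
  toFun f w' := ∑ w, if PieriChain J w I m w' then f w else 0
  map_add' f g := by
    ext w'
    simp only [Pi.add_apply, ← Finset.sum_add_distrib]
    exact Finset.sum_congr rfl fun w _ => by split_ifs <;> simp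
  map_smul' c f := by
    ext w'
    simp only [Pi.smul_apply, RingHom.id_apply, Finset.smul_sum]
    exact Finset.sum_congr rfl fun w _ => by split_ifs <;> simp

theorem chainOp_apply (f : Perm (Fin N) → ℤ) (w' : Perm (Fin N)) :
    chainOp m I J f w' = ∑ w, if PieriChain J w I m w' then f w else 0 :=
  rfl

theorem chainOp_zero : chainOp 0 I J = 1 := by
  refine LinearMap.ext fun f => funext fun w' => ?_
  simp [chainOp_apply, pieriChain_zero_iff]

theorem chainOp_empty_right : chainOp (m + 1) I ∅ = 0 := by
  refine LinearMap.ext fun f => funext fun w' => ?_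
  simp [chainOp_apply, not_pieriChain_empty]

theorem chainOp_empty_left : chainOp (m + 1) ∅ J = 0 := by
  refine LinearMap.ext fun f => funext fun w' => ?_
  refine Finset.sum_eq_zero fun w _ => if_neg ?_
  rintro (_ | ⟨ha, _, _, _⟩)
  simp at ha

theorem coverOp_mul_chainOp_apply (f : Perm (Fin N) → ℤ) (w' : Perm (Fin N)) :
    (coverOp a b * chainOp m I J) f w' =
      ∑ w, if Covers (w' * swap a b) a b ∧ PieriChain J w I m (w' * swap a b) then f w else 0 := by
  rw [Module.End.mul_apply, coverOp_apply, chainOp_apply]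
  split_ifs with h <;> simp [h]

/-- The equation `w' b = w a` recovers `a`, so the ends counted on the right do not overlap. -/
theorem chainOp_insert_right (hIJ : Disjoint I J) (hbI : b ∉ I) (hbJ : b ∉ J) :
    chainOp (m + 1) I (insert b J) =
      chainOp (m + 1) I J + ∑ a ∈ I, coverOp a b * chainOp m (I.erase a) (insert b J) := by
  refine LinearMap.ext fun f => funext fun w' => ?_
  simp only [LinearMap.add_apply, Pi.add_apply, LinearMap.sum_apply, Finset.sum_apply,
    coverOp_mul_chainOp_apply, chainOp_apply]
  rw [Finset.sum_comm, ← Finset.sum_add_distrib]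
  refine Finset.sum_congr rfl fun w _ => ?_
  have hend {a : Fin N} (ha : a ∈ I)
      (h : PieriChain (insert b J) w (I.erase a) m (w' * swap a b)) : w' b = w a :=
    h.apply_eq_of_mul_swap <| fun hmem => (Finset.mem_insert.1 hmem).elim
      (ne_of_mem_of_not_mem ha hbI) (Finset.disjoint_left.1 hIJ ha)
  rw [Finset.sum_ite_zero _ _ fun a ha c hc h h' =>
    w.injective ((hend ha h.2).symm.trans (hend hc h'.2))]
  have hexcl : PieriChain J w I (m + 1) w' → ¬∃ a ∈ I, Covers (w' * swap a b) a b ∧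
      PieriChain (insert b J) w (I.erase a) m (w' * swap a b) := by
    rintro h ⟨a, ha, -, h'⟩
    exact ne_of_mem_of_not_mem ha hbI (w.injective ((hend ha h').symm.trans (h.apply_eq hbI hbJ)))
  rw [pieriChain_insert_iff hIJ hbI hbJ]
  split_ifs <;> simp_all

theorem coverOp_mul_chainOp_singleton :
    coverOp a j * chainOp m I {j} = coverOp a j * chainOp m (I.erase a) {j} := by
  refine LinearMap.ext fun f => funext fun w' => ?_
  simp only [coverOp_mul_chainOp_apply]
  refine Finset.sum_congr rfl fun w _ => if_congr (and_congr_right fun hcov => ?_) rfl rfl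
  exact ⟨fun h => h.erase_of_apply_lt hcov.apply_lt_apply,
    fun h => h.mono (Finset.erase_subset a I) subset_rfl⟩

/-- The truncation to the positions `I ∪ {j} ∪ J` of the operator that multiplies Schubert
polynomials by `x_j` according to Monk's rule. -/
noncomputable def theta (I : Finset (Fin N)) (j : Fin N) (J : Finset (Fin N)) :
    Module.End ℤ (Perm (Fin N) → ℤ) :=
  ∑ b ∈ J, coverOp j b - ∑ a ∈ I, coverOp a j

theorem coverOp_mul_theta_erase (ha : a ∈ I) (hb : b ∉ J) (hI : ∀ c ∈ I, c < j)
    (hJ : ∀ c ∈ J, j < c) (hjb : j < b) :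
    coverOp a b * theta (I.erase a) j (insert b J) =
      theta I j J * coverOp a b + coverOp j b * coverOp a j := by
  have haj := hI a ha
  have hright : coverOp a b * ∑ d ∈ J, coverOp j d = (∑ d ∈ J, coverOp j d) * coverOp a b := by
    rw [Finset.mul_sum, Finset.sum_mul]
    exact Finset.sum_congr rfl fun d hd => coverOp_mul_comm haj.ne (haj.trans (hJ d hd)).ne hjb.ne'
      (ne_of_mem_of_not_mem hd hb).symm
  have hleft : coverOp a b * ∑ c ∈ I.erase a, coverOp c j =
      (∑ c ∈ I.erase a, coverOp c j) * coverOp a b := by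
    rw [Finset.mul_sum, Finset.sum_mul]
    refine Finset.sum_congr rfl fun c hc => ?_
    obtain ⟨hca, hcI⟩ := Finset.mem_erase.1 hc
    exact coverOp_mul_comm hca.symm haj.ne ((hI c hcI).trans hjb).ne' hjb.ne'
  rw [theta, theta, Finset.sum_insert hb, ← Finset.add_sum_erase I (coverOp · j) ha, mul_sub,
    mul_add, hright, hleft, coverOp_braid haj hjb]
  noncomm_ring

theorem theta_insert (hb : b ∉ J) : theta I j (insert b J) = theta I j J + coverOp j b := by
  rw [theta, theta, Finset.sum_insert hb, add_sub_assoc, add_comm]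

theorem chainOp_insert_left_empty (hj : j ∉ I) :
    chainOp (m + 1) (insert j I) ∅ =
      chainOp (m + 1) I (insert j ∅) + theta I j ∅ * chainOp m I (insert j ∅) := by
  rw [chainOp_insert_right (Finset.disjoint_empty_right I) hj (Finset.notMem_empty j),
    chainOp_empty_right, chainOp_empty_right, theta, Finset.sum_empty, zero_sub, neg_mul,
    Finset.sum_mul, insert_empty_eq, zero_add,
    ← Finset.sum_congr rfl fun a _ => coverOp_mul_chainOp_singleton (a := a), add_neg_cancel]

theorem disjoint_of_forall_lt (hI : ∀ a ∈ I, a < j) (hJ : ∀ b ∈ J, j < b) :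
    Disjoint I J :=
  Finset.disjoint_left.2 fun a haI haJ => lt_asymm (hI a haI) (hJ a haJ)

/-- What inserting `b` adds to the two sides of `chainOp_insert_left`. -/
theorem sum_coverOp_mul_chainOp_insert_left (hI : ∀ a ∈ I, a < j) (hJ : ∀ d ∈ J, j < d)
    (hjb : j < b) (hb : b ∉ J)
    (ih : ∀ a ∈ I, chainOp (m + 1) (insert j (I.erase a)) (insert b J) =
      chainOp (m + 1) (I.erase a) (insert j (insert b J)) +
        theta (I.erase a) j (insert b J) * chainOp m (I.erase a) (insert j (insert b J))) :
    coverOp j b * chainOp (m + 1) I (insert b J) +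
        ∑ a ∈ I, coverOp a b * chainOp (m + 1) (insert j (I.erase a)) (insert b J) =
      coverOp j b * chainOp (m + 1) I (insert j (insert b J)) +
        theta I j J * ∑ a ∈ I, coverOp a b * chainOp m (I.erase a) (insert j (insert b J)) +
        ∑ a ∈ I, coverOp a b * chainOp (m + 1) (I.erase a) (insert j (insert b J)) := by
  have hJ' : ∀ d ∈ insert b J, j < d := Finset.forall_mem_insert _ _ _ |>.2 ⟨hjb, hJ⟩
  have hterm : ∀ a ∈ I,
      coverOp a b * chainOp (m + 1) (insert j (I.erase a)) (insert b J) =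
        coverOp a b * chainOp (m + 1) (I.erase a) (insert j (insert b J)) +
          theta I j J * (coverOp a b * chainOp m (I.erase a) (insert j (insert b J))) +
          coverOp j b * (coverOp a j * chainOp m (I.erase a) (insert j (insert b J))) := by
    intro a ha
    rw [ih a ha, mul_add, ← mul_assoc, coverOp_mul_theta_erase ha hb hI hJ hjb]
    noncomm_ring
  rw [Finset.sum_congr rfl hterm, Finset.sum_add_distrib, Finset.sum_add_distrib,
    ← Finset.mul_sum, ← Finset.mul_sum, chainOp_insert_right (disjoint_of_forall_lt hI hJ')
      (fun h => lt_irrefl j (hI j h)) (fun h => lt_irrefl j (hJ' j h))]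
  noncomm_ring

/-- Moving `j` from the columns on the right to those on the left multiplies the generating
function of the operators `chainOp m` by `1 + t · theta`, as it does with `1 + t · x_j` for that of
the elementary symmetric polynomials. -/
theorem chainOp_insert_left (hI : ∀ a ∈ I, a < j) (hJ : ∀ b ∈ J, j < b) :
    chainOp (m + 1) (insert j I) J =
      chainOp (m + 1) I (insert j J) + theta I j J * chainOp m I (insert j J) := by
  induction m using Nat.strong_induction_on generalizing I J with
  | _ m ihm =>
  have hjI : j ∉ I := fun h => lt_irrefl j (hI j h)
  induction J using Finset.induction_on with
  | empty => exact chainOp_insert_left_empty hjI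
  | insert b J hb ihJ =>
    obtain ⟨hjb, hJ'⟩ := (Finset.forall_mem_insert _ _ _).1 hJ
    have hbI : b ∉ I := fun h => lt_asymm (hI b h) hjb
    have hjJ : j ∉ J := fun h => lt_irrefl j (hJ' j h)
    have hIJ : Disjoint I J := disjoint_of_forall_lt hI hJ'
    have hbI' : b ∉ insert j I := by simp [hbI, hjb.ne']
    have hbJ' : b ∉ insert j J := by simp [hb, hjb.ne']
    have hleft : Disjoint (insert j I) J := Finset.disjoint_insert_left.2 ⟨hjJ, hIJ⟩
    have hright : Disjoint I (insert j J) := Finset.disjoint_insert_right.2 ⟨hjI, hIJ⟩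
    have herase : ∑ a ∈ I, coverOp a b * chainOp m ((insert j I).erase a) (insert b J) =
        ∑ a ∈ I, coverOp a b * chainOp m (insert j (I.erase a)) (insert b J) :=
      Finset.sum_congr rfl fun a ha => by
        rw [Finset.erase_insert_of_ne (ne_of_mem_of_not_mem ha hjI).symm]
    rw [chainOp_insert_right hleft hbI' hb, Finset.sum_insert hjI, Finset.erase_insert hjI, herase,
      ihJ hJ', theta_insert hb, Finset.insert_comm j b, chainOp_insert_right hright hbI hbJ',
      ← Finset.insert_comm j b]
    obtain _ | m := m
    · simp only [chainOp_zero, mul_one]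
      abel
    · rw [sum_coverOp_mul_chainOp_insert_left hI hJ' hjb hb fun a _ => ihm m m.lt_succ_self
        (fun c hc => hI c (Finset.mem_of_mem_erase hc)) hJ]
      have hsplit := chainOp_insert_right (m := m) hright hbI hbJ'
      rw [← Finset.insert_comm j b] at hsplit
      rw [add_mul (theta I j J), ← add_assoc, hsplit]
      noncomm_ring

end ChainOperators

section RelC

variable {N k m : ℕ} {w w' : Perm (Fin N)} {a b a' b' : ℕ → ℕ}

/-- The positions `1, …, k`. -/
def leftPos (N k : ℕ) : Finset (Fin N) := {i | (i : ℕ) < k}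

/-- The positions `k + 1, …, N`. -/
def rightPos (N k : ℕ) : Finset (Fin N) := {i | k ≤ (i : ℕ)}

theorem mem_leftPos {i : Fin N} : i ∈ leftPos N k ↔ (i : ℕ) < k := by
  simp [leftPos]

theorem mem_rightPos {i : Fin N} : i ∈ rightPos N k ↔ k ≤ (i : ℕ) := by
  simp [rightPos]

theorem leftPos_succ (j : Fin N) : leftPos N (j + 1) = insert j (leftPos N j) := by
  ext i
  rw [Finset.mem_insert, mem_leftPos, mem_leftPos, Nat.lt_add_one_iff_lt_or_eq, Fin.ext_iff,
    or_comm]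

theorem rightPos_eq_insert (j : Fin N) : rightPos N j = insert j (rightPos N (j + 1)) := by
  ext i
  rw [Finset.mem_insert, mem_rightPos, mem_rightPos, Fin.ext_iff]
  omega

variable [NeZero N]

theorem pos_val {j : ℕ} (hj : 1 ≤ j) (hjN : j ≤ N) : (pos N j : ℕ) = j - 1 :=
  Nat.mod_eq_of_lt (by omega)

theorem pos_val_add_one (x : Fin N) : pos N (x + 1) = x :=
  Fin.ext (pos_val (Nat.le_add_left 1 x) x.isLt)

theorem tProd_succ (a b : ℕ → ℕ) (m : ℕ) :
    tProd N a b (m + 1) = tProd N a b m * t N (a m) (b m) := by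
  simp [tProd, List.range_succ]

theorem tProd_congr (ha : ∀ i < m, a i = a' i) (hb : ∀ i < m, b i = b' i) :
    tProd N a b m = tProd N a' b' m :=
  congrArg List.prod <| List.map_congr_left fun i hi => by
    rw [ha i (List.mem_range.1 hi), hb i (List.mem_range.1 hi)]

theorem stepOK_zero : StepOK N k 0 w a b := by
  refine ⟨fun i hi => absurd hi i.not_lt_zero, fun i hi => ?_⟩
  simp [Nat.le_zero.1 hi, tProd]

theorem stepOK_succ_iff :
    StepOK N k (m + 1) w a b ↔ StepOK N k m w a b ∧ (1 ≤ a m ∧ a m ≤ k ∧ k < b m ∧ b m ≤ N) ∧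
      Covers (w * tProd N a b m) (pos N (a m)) (pos N (b m)) := by
  have hlen : len (w * tProd N a b (m + 1)) =
      len (w * tProd N a b m * swap (pos N (a m)) (pos N (b m))) := by
    rw [tProd_succ, t, mul_assoc]
  constructor
  · rintro ⟨hab, hstep⟩
    obtain ⟨ha, hak, hkb, hb⟩ := hab m m.lt_succ_self
    refine ⟨⟨fun i hi => hab i (hi.trans m.lt_succ_self),
      fun i hi => hstep i (hi.trans m.le_succ)⟩, ⟨ha, hak, hkb, hb⟩, ?_, ?_⟩
    · rw [Fin.lt_def, pos_val ha (by omega), pos_val (by omega) hb]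
      omega
    · rw [← hlen, hstep _ le_rfl, hstep m m.le_succ, add_assoc]
  · rintro ⟨⟨hab, hstep⟩, habm, -, hcov⟩
    refine ⟨fun i hi => ?_, fun i hi => ?_⟩
    · obtain hi | rfl := Nat.lt_succ_iff_lt_or_eq.1 hi
      exacts [hab i hi, habm]
    · obtain hi | rfl := Nat.le_succ_iff.1 hi
      exacts [hstep i hi, by rw [hlen, hcov, hstep m le_rfl, add_assoc]]

theorem stepOK_congr (ha : ∀ i < m, a i = a' i) (hb : ∀ i < m, b i = b' i) :
    StepOK N k m w a b ↔ StepOK N k m w a' b' := by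
  refine and_congr (forall₂_congr fun i hi => ?_) (forall₂_congr fun i hi => ?_)
  · rw [ha i hi, hb i hi]
  · rw [tProd_congr (fun j hj => ha j (hj.trans_le hi)) fun j hj => hb j (hj.trans_le hi)]

theorem StepOK.pieriChain {I : Finset (Fin N)} (h : StepOK N k m w a b) (hk : k ≤ N)
    (hinj : Set.InjOn a (Set.Iio m)) (hI : ∀ i < m, pos N (a i) ∈ I) :
    PieriChain (rightPos N k) w I m (w * tProd N a b m) := by
  induction m generalizing I with
  | zero =>
    simpa [tProd] using PieriChain.refl I
  | succ m ih =>
    obtain ⟨hm, ⟨ha, hak, hkb, hb⟩, hcov⟩ := stepOK_succ_iff.1 h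
    rw [tProd_succ, ← mul_assoc]
    refine .step (hI m m.lt_succ_self) ?_ hcov ?_
    · rw [mem_rightPos, pos_val (by omega) hb]
      omega
    refine ih hm (hinj.mono (Set.Iio_subset_Iio m.le_succ)) fun i hi => ?_
    refine Finset.mem_erase.2 ⟨fun hpos => hi.ne ?_, hI i (hi.trans m.lt_succ_self)⟩
    obtain ⟨hai, haik, -, -⟩ := hm.1 i hi
    have hval := congrArg Fin.val hpos
    rw [pos_val hai (by omega), pos_val ha (by omega)] at hval
    exact hinj (hi.trans m.lt_succ_self) m.lt_succ_self (by omega)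

theorem PieriChain.exists_stepOK {I : Finset (Fin N)} (h : PieriChain (rightPos N k) w I m w')
    (hI : I ⊆ leftPos N k) :
    ∃ a b : ℕ → ℕ, StepOK N k m w a b ∧ w' = w * tProd N a b m ∧ Set.InjOn a (Set.Iio m) ∧
      ∀ i < m, pos N (a i) ∈ I := by
  induction h with
  | refl I =>
    exact ⟨0, 0, stepOK_zero, by simp [tProd], fun i hi => absurd hi i.not_lt_zero,
      fun i hi => absurd hi i.not_lt_zero⟩
  | @step I m u x y hx hy hcov _ ih =>
    obtain ⟨a, b, hab, rfl, hinj, hmem⟩ := ih ((Finset.erase_subset x I).trans hI)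
    have ha : ∀ i < m, Function.update a m (x + 1) i = a i := fun i hi =>
      Function.update_of_ne hi.ne _ _
    have hb : ∀ i < m, Function.update b m (y + 1) i = b i := fun i hi =>
      Function.update_of_ne hi.ne _ _
    refine ⟨Function.update a m (x + 1), Function.update b m (y + 1),
      stepOK_succ_iff.2 ⟨?_, ?_, ?_⟩, ?_, ?_, ?_⟩
    · exact (stepOK_congr ha hb).2 hab
    · have hxk := mem_leftPos.1 (hI hx)
      have hky := mem_rightPos.1 hy
      simp only [Function.update_self]
      omega
    · rwa [tProd_congr ha hb, Function.update_self, Function.update_self, pos_val_add_one,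
        pos_val_add_one]
    · rw [tProd_succ, tProd_congr ha hb, Function.update_self, Function.update_self, t,
        pos_val_add_one, pos_val_add_one, mul_assoc]
    · have hne : ∀ i < m, a i ≠ x + 1 := fun i hi hax =>
        Finset.ne_of_mem_erase (hmem i hi) (by rw [hax, pos_val_add_one])
      rw [← Order.succ_eq_add_one m, Order.Iio_succ, ← Set.Iio_insert,
        Set.injOn_insert Set.self_notMem_Iio, Function.update_self]
      refine ⟨hinj.congr fun i hi => (ha i hi).symm, ?_⟩
      rintro ⟨i, hi, hix⟩
      exact hne i hi ((ha i hi).symm.trans hix)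
    · intro i hi
      obtain hi | rfl := Nat.lt_succ_iff_lt_or_eq.1 hi
      · exact ha i hi ▸ Finset.mem_of_mem_erase (hmem i hi)
      · rwa [Function.update_self, pos_val_add_one]

theorem relC_iff_pieriChain (hk : k ≤ N) :
    RelC N k m w w' ↔ PieriChain (rightPos N k) w (leftPos N k) m w' := by
  constructor
  · rintro ⟨a, b, hab, rfl, hne⟩
    refine hab.pieriChain hk (fun i hi j hj => ?_) fun i hi => ?_
    · exact not_imp_not.1 (hne i j hi hj)
    · obtain ⟨ha, hak, -, -⟩ := hab.1 i hi
      rw [mem_leftPos, pos_val ha (by omega)]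
      omega
  · intro h
    obtain ⟨a, b, hab, hw', hinj, -⟩ := h.exists_stepOK subset_rfl
    exact ⟨a, b, hab, hw', fun i j hi hj => mt (hinj hi hj)⟩

end RelC

section DividedDifferences

variable {σ R : Type*} [CommRing R]

theorem X_sub_X_ne_zero [Nontrivial R] {a b : σ} (hab : a ≠ b) :
    (X a - X b : MvPolynomial σ R) ≠ 0 :=
  sub_ne_zero.2 fun h => hab (X_injective h)

variable [DecidableEq σ]

theorem swap_braid {a b c : σ} (hab : a ≠ b) (hbc : b ≠ c) (hac : a ≠ c) :
    swap a b * (swap b c * swap a b) = swap b c * (swap a b * swap b c) := by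
  rw [← mul_assoc, ← mul_assoc, swap_mul_swap_mul_swap hab hac, swap_comm a b, swap_comm b c,
    swap_mul_swap_mul_swap hbc.symm hac.symm, swap_comm]

theorem X_sub_X_dvd_sub_rename_swap (a b : σ) (f : MvPolynomial σ R) :
    X a - X b ∣ f - rename (swap a b) f := by
  induction f using MvPolynomial.induction_on with
  | C r => simp
  | add p q hp hq =>
    rw [map_add, add_sub_add_comm]
    exact dvd_add hp hq
  | mul_X p i hp =>
    have hX : X a - X b ∣ (X i - X (swap a b i) : MvPolynomial σ R) := by
      rcases eq_or_ne i a with rfl | hia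
      · simp
      rcases eq_or_ne i b with rfl | hib
      · rw [swap_apply_right, ← neg_sub, neg_dvd]
      · simp [swap_apply_of_ne_of_ne hia hib]
    have hsplit : p * X i - rename (swap a b) p * X (swap a b i) =
        (p - rename (swap a b) p) * X i + rename (swap a b) p * (X i - X (swap a b i)) := by
      ring
    rw [map_mul, rename_X, hsplit]
    exact dvd_add (hp.mul_right _) (hX.mul_left _)

variable [IsDomain R] {a b c d : σ} {f g : MvPolynomial σ R}

/-- The divided difference `f ↦ (f - t_{a,b} f) / (x_a - x_b)`, with value `0` for `a = b`. -/
noncomputable def divDiffAt (a b : σ) : MvPolynomial σ R →ₗ[R] MvPolynomial σ R where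
  toFun f := if a = b then 0 else (X_sub_X_dvd_sub_rename_swap a b f).choose
  map_add' f g := by
    split_ifs with hab
    · rw [add_zero]
    apply mul_left_cancel₀ (X_sub_X_ne_zero (R := R) hab)
    simp_rw [mul_add, ← Exists.choose_spec (X_sub_X_dvd_sub_rename_swap a b _), map_add,
      add_sub_add_comm]
  map_smul' r f := by
    split_ifs with hab
    · rw [smul_zero]
    apply mul_left_cancel₀ (X_sub_X_ne_zero (R := R) hab)
    simp_rw [mul_smul_comm, ← Exists.choose_spec (X_sub_X_dvd_sub_rename_swap a b _), map_smul,
      smul_sub, RingHom.id_apply]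

theorem X_sub_X_mul_divDiffAt (a b : σ) (f : MvPolynomial σ R) :
    (X a - X b) * divDiffAt a b f = f - rename (swap a b) f := by
  rcases eq_or_ne a b with rfl | hab
  · simp
  · have hdd : divDiffAt a b f = (X_sub_X_dvd_sub_rename_swap a b f).choose := if_neg hab
    rw [hdd, ← (X_sub_X_dvd_sub_rename_swap a b f).choose_spec]

theorem divDiffAt_eq_of_mul_eq (hab : a ≠ b)
    (h : (X a - X b) * g = f - rename (swap a b) f) : divDiffAt a b f = g :=
  mul_left_cancel₀ (X_sub_X_ne_zero hab) ((X_sub_X_mul_divDiffAt a b f).trans h.symm)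

theorem divDiffAt_self (a : σ) : (divDiffAt a a : MvPolynomial σ R →ₗ[R] MvPolynomial σ R) = 0 :=
  LinearMap.ext fun _ => if_pos rfl

theorem divDiffAt_mul (a b : σ) (f g : MvPolynomial σ R) :
    divDiffAt a b (f * g) = divDiffAt a b f * g + rename (swap a b) f * divDiffAt a b g := by
  rcases eq_or_ne a b with rfl | hab
  · simp [divDiffAt_self]
  apply divDiffAt_eq_of_mul_eq hab
  rw [map_mul]
  linear_combination g * X_sub_X_mul_divDiffAt a b f +
    rename (swap a b) f * X_sub_X_mul_divDiffAt a b g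

theorem divDiffAt_X (a b j : σ) :
    divDiffAt a b (X j : MvPolynomial σ R) = C ((Pi.single a 1 - Pi.single b 1 : σ → R) j) := by
  rcases eq_or_ne a b with rfl | hab
  · simp [divDiffAt_self]
  apply divDiffAt_eq_of_mul_eq hab
  rw [rename_X]
  rcases eq_or_ne j a with rfl | hja
  · simp [hab]
  rcases eq_or_ne j b with rfl | hjb
  · simp [hja]
  · simp [hja, hjb, swap_apply_of_ne_of_ne]

theorem X_mul_divDiffAt (a b j : σ) (f : MvPolynomial σ R) :
    X j * divDiffAt a b f = divDiffAt a b (X (swap a b j) * f) +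
      (Pi.single a 1 - Pi.single b 1 : σ → R) j • f := by
  have hswap : (Pi.single a 1 - Pi.single b 1 : σ → R) (swap a b j) =
      -(Pi.single a 1 - Pi.single b 1 : σ → R) j := by
    simp [Pi.single_apply, swap_apply_eq_iff]
  rw [divDiffAt_mul, divDiffAt_X, rename_X, swap_apply_self, hswap, ← smul_eq_C_mul, neg_smul]
  ring

theorem divDiffAt_eq_zero (h : rename (swap a b) f = f) : divDiffAt a b f = 0 := by
  rcases eq_or_ne a b with rfl | hab
  · simp [divDiffAt_self]
  · exact divDiffAt_eq_of_mul_eq hab (by rw [h, mul_zero, sub_self])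

theorem rename_divDiffAt (u : Perm σ) (a b : σ) (f : MvPolynomial σ R) :
    rename u (divDiffAt a b f) = divDiffAt (u a) (u b) (rename u f) := by
  rcases eq_or_ne a b with rfl | hab
  · simp [divDiffAt_self]
  refine (divDiffAt_eq_of_mul_eq (u.injective.ne hab) ?_).symm
  have h := congrArg (rename u) (X_sub_X_mul_divDiffAt a b f)
  rw [map_mul, map_sub, map_sub, rename_X, rename_X, rename_rename] at h
  rw [h, rename_rename, ← Perm.coe_mul, ← Perm.coe_mul, mul_swap_eq_swap_mul]

theorem divDiffAt_comm (a b : σ) (f : MvPolynomial σ R) : divDiffAt b a f = -divDiffAt a b f := by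
  rcases eq_or_ne a b with rfl | hab
  · simp [divDiffAt_self]
  apply divDiffAt_eq_of_mul_eq hab.symm
  rw [swap_comm, ← X_sub_X_mul_divDiffAt]
  ring

theorem rename_swap_divDiffAt (a b : σ) (f : MvPolynomial σ R) :
    rename (swap a b) (divDiffAt a b f) = divDiffAt a b f := by
  rcases eq_or_ne a b with rfl | hab
  · simp [divDiffAt_self]
  rw [rename_divDiffAt, swap_apply_left, swap_apply_right]
  apply divDiffAt_eq_of_mul_eq hab.symm
  have hswap : rename (swap b a) (rename (swap a b) f) = f := by
    rw [rename_rename, swap_comm, ← Perm.coe_mul, swap_mul_self, Perm.coe_one, rename_id_apply]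
  rw [hswap]
  linear_combination -X_sub_X_mul_divDiffAt a b f

theorem divDiffAt_divDiffAt (a b : σ) (f : MvPolynomial σ R) :
    divDiffAt a b (divDiffAt a b f) = 0 :=
  divDiffAt_eq_zero (rename_swap_divDiffAt a b f)

theorem divDiffAt_comm_divDiffAt (hac : a ≠ c) (had : a ≠ d) (hbc : b ≠ c) (hbd : b ≠ d)
    (f : MvPolynomial σ R) :
    divDiffAt a b (divDiffAt c d f) = divDiffAt c d (divDiffAt a b f) := by
  rcases eq_or_ne a b with rfl | hab
  · simp [divDiffAt_self]
  apply divDiffAt_eq_of_mul_eq hab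
  have hX : rename (swap c d) (X a - X b : MvPolynomial σ R) = X a - X b := by
    rw [map_sub, rename_X, rename_X, swap_apply_of_ne_of_ne hac had,
      swap_apply_of_ne_of_ne hbc hbd]
  have hmul := divDiffAt_mul c d (X a - X b) (divDiffAt a b f)
  rw [divDiffAt_eq_zero hX, hX, zero_mul, zero_add, X_sub_X_mul_divDiffAt, map_sub] at hmul
  rw [← hmul, rename_divDiffAt, swap_apply_of_ne_of_ne hac.symm hbc.symm,
    swap_apply_of_ne_of_ne had.symm hbd.symm]

/-- The right-hand side is `∑ sign(u) u f` over the permutations `u` of `{a, b, c}`, so it does not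
change, up to sign, when the letters are permuted: this gives the braid relation. -/
theorem mul_divDiffAt_divDiffAt_divDiffAt (hab : a ≠ b) (hbc : b ≠ c) (hac : a ≠ c)
    (f : MvPolynomial σ R) :
    (X a - X b) * ((X a - X c) * ((X b - X c) * divDiffAt a b (divDiffAt b c (divDiffAt a b f)))) =
      f - rename (swap a b) f - rename (swap b c) f
        + rename (swap b c) (rename (swap a b) f) + rename (swap a b) (rename (swap b c) f)
        - rename (swap a b) (rename (swap b c) (rename (swap a b) f)) := by
  have hf := X_sub_X_mul_divDiffAt a b f
  have hrf := congrArg (rename (swap b c)) hf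
  have hsrf := congrArg (rename (swap a b)) hrf
  have hg := X_sub_X_mul_divDiffAt b c (divDiffAt a b f)
  have hsg := congrArg (rename (swap a b)) hg
  have hh := X_sub_X_mul_divDiffAt a b (divDiffAt b c (divDiffAt a b f))
  simp only [map_mul, map_sub, rename_X, rename_swap_divDiffAt, swap_apply_left, swap_apply_right,
    swap_apply_of_ne_of_ne hab hac, swap_apply_of_ne_of_ne hac.symm hbc.symm] at hrf hsrf hsg
  linear_combination (X a - X c) * (X b - X c) * hh + (X a - X c) * hg - (X b - X c) * hsg
    + hf - hrf + hsrf

theorem divDiffAt_braid (hab : a ≠ b) (hbc : b ≠ c) (hac : a ≠ c) (f : MvPolynomial σ R) :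
    divDiffAt a b (divDiffAt b c (divDiffAt a b f)) =
      divDiffAt b c (divDiffAt a b (divDiffAt b c f)) := by
  apply mul_left_cancel₀ (X_sub_X_ne_zero (R := R) hbc)
  apply mul_left_cancel₀ (X_sub_X_ne_zero (R := R) hac)
  apply mul_left_cancel₀ (X_sub_X_ne_zero (R := R) hab)
  have h := mul_divDiffAt_divDiffAt_divDiffAt hab hbc hac f
  have h' := mul_divDiffAt_divDiffAt_divDiffAt hbc.symm hab.symm hac.symm f
  have hswap : rename (swap b c) (rename (swap a b) (rename (swap b c) f)) =
      rename (swap a b) (rename (swap b c) (rename (swap a b) f)) := by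
    simp only [rename_rename, ← Perm.coe_mul, swap_braid hab hbc hac]
  simp only [swap_comm c b, swap_comm b a, divDiffAt_comm b c, divDiffAt_comm a b, map_neg, neg_neg,
    hswap] at h'
  linear_combination h - h'

end DividedDifferences

section ReducedWords

variable {N : ℕ} [NeZero N] {u w : Perm (Fin N)} {a b c d : Fin N}

theorem divDiff_eq_divDiffAt {i : ℕ} (hi : pos N i ≠ pos N (i + 1)) (f : MvPolynomial (Fin N) ℤ) :
    divDiff i f = divDiffAt (pos N i) (pos N (i + 1)) f := by
  have hdvd := X_sub_X_dvd_sub_rename_swap (pos N i) (pos N (i + 1)) f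
  refine (divDiffAt_eq_of_mul_eq hi ?_).symm
  rw [divDiff, t, dif_pos hdvd]
  exact hdvd.choose_spec.symm

theorem pos_covBy_pos {i : ℕ} (hi : 1 ≤ i) (hiN : i < N) : pos N i ⋖ pos N (i + 1) := by
  rw [Fin.covBy_iff, pos_val hi hiN.le, pos_val (by omega) hiN, Nat.covBy_iff_add_one_eq]
  omega

theorem redWordAux_eq_nil_or (u : Perm (Fin N)) :
    (u = 1 ∧ ∀ fuel, redWordAux N fuel u = []) ∨
      ∃ i, pos N i ⋖ pos N (i + 1) ∧ u (pos N (i + 1)) < u (pos N i) ∧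
        ∀ fuel, redWordAux N (fuel + 1) u =
          redWordAux N fuel (u * swap (pos N i) (pos N (i + 1))) ++ [i] := by
  rcases hfind : ((List.range (N - 1)).map (· + 1)).find?
      (fun i => decide (val u (i + 1) < val u i)) with _ | i
  · refine .inl ⟨eq_one_of_forall_covBy_lt fun a b hab => ?_, fun fuel => ?_⟩
    · have hval := Nat.covBy_iff_add_one_eq.1 (Fin.covBy_iff.1 hab)
      have hmem : (a : ℕ) + 1 ∈ (List.range (N - 1)).map (· + 1) := by
        simp only [List.mem_map, List.mem_range, Nat.add_right_cancel_iff, exists_eq_right]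
        omega
      have hasc := List.find?_eq_none.1 hfind _ hmem
      rw [decide_eq_true_eq, val, val, hval, pos_val_add_one, ← hval, pos_val_add_one] at hasc
      exact lt_of_le_of_ne (by omega) (u.injective.ne hab.ne)
    · cases fuel <;> simp only [redWordAux, hfind]
  · have hmem := List.mem_of_find?_eq_some hfind
    simp only [List.mem_map, List.mem_range] at hmem
    obtain ⟨j, hj, rfl⟩ := hmem
    have hdesc := List.find?_some hfind
    rw [decide_eq_true_eq] at hdesc
    refine .inr ⟨j + 1, pos_covBy_pos (by omega) (by omega), ?_, fun fuel => ?_⟩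
    · exact Nat.lt_of_add_lt_add_right hdesc
    · rw [redWordAux, hfind]
      rfl

theorem redWordAux_eq_of_len_le {n n' : ℕ} (hn : len u ≤ n) (hn' : len u ≤ n') :
    redWordAux N n u = redWordAux N n' u := by
  induction n generalizing u n' with
  | zero =>
    obtain ⟨-, hnil⟩ | ⟨i, hi, hdesc, -⟩ := redWordAux_eq_nil_or u
    · rw [hnil, hnil]
    · have hlen := len_eq_len_mul_swap_add_one_of_covBy hi hdesc
      omega
  | succ n ih =>
    obtain ⟨-, hnil⟩ | ⟨i, hi, hdesc, hstep⟩ := redWordAux_eq_nil_or u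
    · rw [hnil, hnil]
    · have hlen := len_eq_len_mul_swap_add_one_of_covBy hi hdesc
      obtain ⟨n', rfl⟩ := Nat.exists_eq_succ_of_ne_zero (show n' ≠ 0 by omega)
      rw [hstep, hstep, ih (n' := n') (by omega) (by omega)]

/-- The operator `∂_u`, computed from the reduced word `redWord N u`. -/
noncomputable def divDiffPerm (u : Perm (Fin N)) (f : MvPolynomial (Fin N) ℤ) :
    MvPolynomial (Fin N) ℤ :=
  divDiffWord (redWord N u) f

theorem divDiffPerm_one (f : MvPolynomial (Fin N) ℤ) : divDiffPerm 1 f = f := by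
  obtain ⟨-, hnil⟩ | ⟨i, hi, hdesc, -⟩ := redWordAux_eq_nil_or (1 : Perm (Fin N))
  · rw [divDiffPerm, redWord, hnil, divDiffWord, List.foldr_nil]
  · exact absurd hdesc hi.lt.not_gt

theorem exists_divDiffPerm_eq (hu : u ≠ 1) :
    ∃ a b, a ⋖ b ∧ u b < u a ∧
      ∀ f, divDiffPerm u f = divDiffPerm (u * swap a b) (divDiffAt a b f) := by
  obtain ⟨rfl, -⟩ | ⟨i, hi, hdesc, hstep⟩ := redWordAux_eq_nil_or u
  · exact absurd rfl hu
  have hlen := len_eq_len_mul_swap_add_one_of_covBy hi hdesc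
  refine ⟨_, _, hi, hdesc, fun f => ?_⟩
  rw [divDiffPerm, redWord, redWordAux_eq_of_len_le len_le hlen.le, hstep, divDiffWord,
    List.foldr_append, List.foldr_cons, List.foldr_nil, divDiff_eq_divDiffAt hi.ne,
    redWordAux_eq_of_len_le le_rfl len_le]
  rfl

/-- `∂_v = ∂_{v s} ∘ ∂_s` for every descent `s = (a, b)` of `v`. -/
def DescentRule (v : Perm (Fin N)) : Prop :=
  ∀ a b, a ⋖ b → v b < v a → ∀ f, divDiffPerm v f = divDiffPerm (v * swap a b) (divDiffAt a b f)

theorem divDiffPerm_braid (ih : ∀ v : Perm (Fin N), len v < len u → DescentRule v)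
    (hab : a ⋖ b) (hbc : b ⋖ c) (huab : u b < u a) (hubc : u c < u b)
    (f : MvPolynomial (Fin N) ℤ) :
    divDiffPerm (u * swap a b) (divDiffAt a b f) =
      divDiffPerm (u * swap b c) (divDiffAt b c f) := by
  have hac := hab.lt.trans hbc.lt
  have hlen := len_eq_len_mul_swap_add_one_of_covBy hab huab
  have hlen' := len_eq_len_mul_swap_add_one_of_covBy hbc hubc
  have ha := swap_apply_of_ne_of_ne hab.ne hac.ne
  have hc := swap_apply_of_ne_of_ne hac.ne' hbc.ne'
  have h₁ : (u * swap a b) c < (u * swap a b) b := by simpa [hc] using hubc.trans huab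
  have h₂ : (u * swap a b * swap b c) b < (u * swap a b * swap b c) a := by
    simpa [ha, hc] using hubc
  have h₁' : (u * swap b c) b < (u * swap b c) a := by simpa [ha] using hubc.trans huab
  have h₂' : (u * swap b c * swap a b) c < (u * swap b c * swap a b) b := by
    simpa [ha, hc] using huab
  have hlen₁ := len_eq_len_mul_swap_add_one_of_covBy hbc h₁
  have hlen₁' := len_eq_len_mul_swap_add_one_of_covBy hab h₁'
  rw [ih _ (by omega) b c hbc h₁, ih _ (by omega) a b hab h₂, ih _ (by omega) a b hab h₁',
    ih _ (by omega) b c hbc h₂', divDiffAt_braid hab.ne hbc.ne hac.ne]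
  simp only [mul_assoc, swap_braid hab.ne hbc.ne hac.ne]

theorem divDiffPerm_comm (ih : ∀ v : Perm (Fin N), len v < len u → DescentRule v)
    (hab : a ⋖ b) (hcd : c ⋖ d) (hac : a ≠ c) (had : a ≠ d) (hbc : b ≠ c) (hbd : b ≠ d)
    (huab : u b < u a) (hucd : u d < u c) (f : MvPolynomial (Fin N) ℤ) :
    divDiffPerm (u * swap a b) (divDiffAt a b f) =
      divDiffPerm (u * swap c d) (divDiffAt c d f) := by
  have hlen := len_eq_len_mul_swap_add_one_of_covBy hab huab
  have hlen' := len_eq_len_mul_swap_add_one_of_covBy hcd hucd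
  have h : (u * swap a b) d < (u * swap a b) c := by
    simpa [swap_apply_of_ne_of_ne hac.symm hbc.symm, swap_apply_of_ne_of_ne had.symm hbd.symm]
  have h' : (u * swap c d) b < (u * swap c d) a := by
    simpa [swap_apply_of_ne_of_ne hac had, swap_apply_of_ne_of_ne hbc hbd]
  rw [ih _ (by omega) c d hcd h, ih _ (by omega) a b hab h',
    divDiffAt_comm_divDiffAt hac had hbc hbd, mul_assoc, mul_assoc,
    swap_mul_swap_comm hac had hbc hbd]

theorem descentRule (u : Perm (Fin N)) : DescentRule u := by
  induction hn : len u using Nat.strong_induction_on generalizing u with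
  | _ n ih =>
  subst hn
  replace ih : ∀ v : Perm (Fin N), len v < len u → DescentRule v := fun v hv => ih _ hv v rfl
  intro a b hab huab f
  have hu : u ≠ 1 := by
    rintro rfl
    exact hab.lt.not_gt huab
  obtain ⟨c, d, hcd, hucd, hstep⟩ := exists_divDiffPerm_eq hu
  rw [hstep]
  rcases eq_or_ne a c with rfl | hac
  · rw [hab.unique_right hcd]
  rcases eq_or_ne b c with rfl | hbc
  · exact (divDiffPerm_braid ih hab hcd huab hucd f).symm
  rcases eq_or_ne a d with rfl | had
  · exact divDiffPerm_braid ih hcd hab hucd huab f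
  have hbd : b ≠ d := by
    rintro rfl
    exact hac (hab.unique_left hcd)
  exact (divDiffPerm_comm ih hab hcd hac had hbc hbd huab hucd f).symm

theorem divDiffAt_divDiffPerm (hab : a ⋖ b) (hu : u⁻¹ a < u⁻¹ b) (f : MvPolynomial (Fin N) ℤ) :
    divDiffAt a b (divDiffPerm u f) = divDiffPerm (swap a b * u) f := by
  induction hn : len u using Nat.strong_induction_on generalizing u f with
  | _ n ih =>
  subst hn
  rcases eq_or_ne u 1 with rfl | hne
  · rw [divDiffPerm_one, mul_one, descentRule (swap a b) a b hab (by simpa using hab.lt),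
      swap_mul_self, divDiffPerm_one]
  obtain ⟨c, d, hcd, hucd, hstep⟩ := exists_divDiffPerm_eq hne
  have hlen := len_eq_len_mul_swap_add_one_of_covBy hcd hucd
  have hu' : (u * swap c d)⁻¹ a < (u * swap c d)⁻¹ b := by
    rw [mul_inv_rev, swap_inv]
    refine swap_lt_swap_of_covBy hcd hu fun h => hab.lt.not_gt ?_
    obtain ⟨hc, hd⟩ := Prod.mk.inj h
    rwa [← hc, ← hd, Perm.inv_def, apply_symm_apply, apply_symm_apply] at hucd
  have hdesc : (swap a b * u) d < (swap a b * u) c := by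
    refine swap_lt_swap_of_covBy hab hucd fun h => hcd.lt.not_gt ?_
    obtain ⟨ha, hb⟩ := Prod.mk.inj h
    rwa [← ha, ← hb, Perm.inv_def, symm_apply_apply, symm_apply_apply] at hu
  rw [hstep, ih _ (by omega) hu' _ rfl, descentRule (swap a b * u) c d hcd hdesc, mul_assoc]

theorem divDiffAt_schubertPoly_of_gt (hab : a ⋖ b) (hw : w b < w a) :
    divDiffAt a b (schubertPoly N w) = schubertPoly N (w * swap a b) := by
  rw [schubertPoly, schubertPoly, ← divDiffPerm, ← divDiffPerm, divDiffAt_divDiffPerm hab,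
    mul_inv_rev, swap_inv, mul_assoc]
  have hinv : (w0 N)⁻¹ = w0 N := rfl
  rw [mul_inv_rev, inv_inv, hinv]
  exact Fin.rev_lt_rev.2 hw

theorem divDiffAt_schubertPoly_of_lt (hab : a ⋖ b) (hw : w a < w b) :
    divDiffAt a b (schubertPoly N w) = 0 := by
  have hswap := divDiffAt_schubertPoly_of_gt (w := w * swap a b) hab (by simpa using hw)
  rw [mul_assoc, swap_mul_self, mul_one] at hswap
  rw [← hswap, divDiffAt_divDiffAt]

theorem schubertPoly_w0 : schubertPoly N (w0 N) = staircase N := by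
  rw [schubertPoly, ← divDiffPerm, inv_mul_cancel, divDiffPerm_one]

end ReducedWords

section CoinvariantRing

variable {N : ℕ}

theorem divDiffAt_mem_symIdeal (a b : Fin N) {f : MvPolynomial (Fin N) ℤ} (hf : f ∈ symIdeal N) :
    divDiffAt a b f ∈ symIdeal N := by
  induction hf using Submodule.span_induction with
  | mem g hg =>
    rw [divDiffAt_eq_zero (hg.1 _)]
    exact zero_mem _
  | zero =>
    rw [map_zero]
    exact zero_mem _
  | add f g _ _ hf hg =>
    rw [map_add]
    exact add_mem hf hg
  | smul r f hf hdf =>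
    rw [smul_eq_mul, divDiffAt_mul]
    exact add_mem (Ideal.mul_mem_left _ _ hf) (Ideal.mul_mem_left _ _ hdf)

theorem esymm_mem_symIdeal {m : ℕ} (hm : m ≠ 0) : esymm (Fin N) ℤ m ∈ symIdeal N := by
  refine Ideal.subset_span ⟨esymm_isSymmetric _ _ m, ?_⟩
  rw [esymm, map_sum]
  refine Finset.sum_eq_zero fun s hs => ?_
  obtain ⟨i, hi⟩ := Finset.card_ne_zero.1 ((Finset.mem_powersetCard.1 hs).2.trans_ne hm)
  rw [map_prod, Finset.prod_eq_zero hi (constantCoeff_X ℤ i)]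

theorem prod_X_sub_C_mk_X :
    ∏ j : Fin N, (Polynomial.X - Polynomial.C (Ideal.Quotient.mk (symIdeal N) (X j))) =
      Polynomial.X ^ N := by
  have hesymm (m : ℕ) : (Finset.univ.val.map fun j : Fin N =>
      Ideal.Quotient.mk (symIdeal N) (X j)).esymm m =
        Ideal.Quotient.mk (symIdeal N) (esymm (Fin N) ℤ m) := by
    simp only [Finset.esymm_map_val, esymm, map_sum, map_prod]
  have h := Multiset.prod_X_sub_X_eq_sum_esymm
    (Finset.univ.val.map fun j : Fin N => Ideal.Quotient.mk (symIdeal N) (X j))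
  rw [Multiset.map_map] at h
  refine h.trans ((Finset.sum_eq_single 0 (fun m _ hm => ?_) fun h0 => ?_).trans ?_)
  · rw [hesymm, Ideal.Quotient.eq_zero_iff_mem.2 (esymm_mem_symIdeal hm), Polynomial.C_0, zero_mul,
      mul_zero]
  · simp at h0
  · rw [hesymm, esymm_zero]
    simp

end CoinvariantRing

section Staircase

variable {ι A : Type*} [CommRing A] {x : ι → A} {y : A}

theorem C_mul_prod_X_sub_C {s : Finset ι} (hy : ∀ j ∈ s, y * x j = 0) :
    Polynomial.C y * ∏ j ∈ s, (Polynomial.X - Polynomial.C (x j)) =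
      Polynomial.C y * Polynomial.X ^ s.card := by
  induction s using Finset.cons_induction with
  | empty => simp
  | cons i s hi ih =>
    have hi0 : Polynomial.C y * Polynomial.C (x i) = 0 := by
      rw [← Polynomial.C_mul, hy i (Finset.mem_cons_self i s), Polynomial.C_0]
    have hs := ih fun j hj => hy j (Finset.mem_cons_of_mem hj)
    rw [Finset.prod_cons, Finset.card_cons]
    linear_combination Polynomial.X * hs -
      (∏ j ∈ s, (Polynomial.X - Polynomial.C (x j))) * hi0

theorem mul_pow_card_compl_eq_zero [Fintype ι] [DecidableEq ι]
    (hx : ∏ j, (Polynomial.X - Polynomial.C (x j)) = Polynomial.X ^ Fintype.card ι)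
    {s : Finset ι} (hy : ∀ j ∈ s, y * x j = 0) {i : ι} (hi : i ∉ s) :
    y * x i ^ sᶜ.card = 0 := by
  have hcancel : Polynomial.X ^ s.card *
      (Polynomial.C y * ∏ j ∈ sᶜ, (Polynomial.X - Polynomial.C (x j))) =
        Polynomial.X ^ s.card * (Polynomial.C y * Polynomial.X ^ sᶜ.card) := by
    rw [mul_left_comm, ← mul_assoc, ← C_mul_prod_X_sub_C hy, mul_assoc,
      Finset.prod_mul_prod_compl, hx, mul_left_comm, ← pow_add, Finset.card_add_card_compl]
  have heval := congrArg (Polynomial.eval (x i)) ((Polynomial.isRegular_X_pow s.card).left hcancel)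
  rw [Polynomial.eval_mul, Polynomial.eval_mul, Polynomial.eval_prod,
    Finset.prod_eq_zero (Finset.mem_compl.2 hi) (by simp)] at heval
  simpa using heval.symm

theorem prod_leftPos_pow_mul_eq_zero {N : ℕ} {x : Fin N → A}
    (hx : ∏ j, (Polynomial.X - Polynomial.C (x j)) = Polynomial.X ^ N) {k : ℕ} (hk : k ≤ N)
    {j : Fin N} (hj : j ∈ leftPos N k) :
    (∏ i ∈ leftPos N k, x i ^ (N - 1 - (i : ℕ))) * x j = 0 := by
  induction k generalizing j with
  | zero => simp [mem_leftPos] at hj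
  | succ k ih =>
    obtain ⟨i, rfl⟩ : ∃ i : Fin N, (i : ℕ) = k := ⟨⟨k, hk⟩, rfl⟩
    have hi : i ∉ leftPos N i := by simp [mem_leftPos]
    rw [leftPos_succ] at hj ⊢
    rw [Finset.prod_insert hi, mul_comm (x i ^ _)]
    rcases Finset.mem_insert.1 hj with rfl | hj
    · have hcard : (leftPos N j)ᶜ.card = N - 1 - j + 1 := by
        rw [Finset.card_compl, leftPos, Fin.card_filter_val_lt, Fintype.card_fin]
        omega
      rw [mul_assoc, ← pow_succ, ← hcard]
      exact mul_pow_card_compl_eq_zero (by rwa [Fintype.card_fin]) (fun l => ih (by omega)) hi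
    · rw [mul_right_comm, ih (by omega) hj, zero_mul]

theorem X_mul_staircase_mem {N : ℕ} (j : Fin N) : X j * staircase N ∈ symIdeal N := by
  have huniv : leftPos N N = Finset.univ := Finset.filter_true_of_mem fun i _ => i.isLt
  have h := prod_leftPos_pow_mul_eq_zero prod_X_sub_C_mk_X le_rfl (mem_leftPos.2 j.isLt)
  rw [huniv] at h
  rw [← Ideal.Quotient.eq_zero_iff_mem, map_mul, mul_comm, staircase, map_prod, ← h]
  simp only [map_pow]

end Staircase

section Monk

variable {N : ℕ} {a b j : Fin N}

theorem coverOp_sub_coverOp_mul_descentOp (hab : a ⋖ b) (c d : Fin N) :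
    (coverOp c d - coverOp d c) * descentOp a b =
      descentOp a b * (coverOp (swap a b c) (swap a b d) - coverOp (swap a b d) (swap a b c)) +
        if d = swap a b c then (Pi.single a 1 - Pi.single b 1 : Fin N → ℤ) c • 1 else 0 := by
  have hself := coverOp_mul_descentOp_self hab
  have hba := coverOp_eq_zero hab.le
  by_cases h : (c, d) = (a, b)
  · obtain ⟨rfl, rfl⟩ := Prod.mk.inj h
    simp [hba, hab.ne, ← hself]
  by_cases h' : (c, d) = (b, a)
  · obtain ⟨rfl, rfl⟩ := Prod.mk.inj h'
    simp [hba, hab.ne', ← hself]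
  have hcorr : (if d = swap a b c then (Pi.single a 1 - Pi.single b 1 : Fin N → ℤ) c •
      (1 : Module.End ℤ (Perm (Fin N) → ℤ)) else 0) = 0 := by
    refine ite_eq_right_iff.2 fun hd => ?_
    have hca : c ≠ a := by
      rintro rfl
      exact h (by rw [hd, swap_apply_left])
    have hcb : c ≠ b := by
      rintro rfl
      exact h' (by rw [hd, swap_apply_right])
    simp [hca, hcb]
  rw [hcorr, add_zero, sub_mul, mul_sub, coverOp_mul_descentOp hab h h',
    coverOp_mul_descentOp hab (by grind) (by grind)]

/-- The operator on linear combinations of permutations that corresponds, by Monk's rule, to the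
multiplication of Schubert polynomials by `x_j`. -/
noncomputable def monkOp (j : Fin N) : Module.End ℤ (Perm (Fin N) → ℤ) :=
  ∑ d, (coverOp j d - coverOp d j)

theorem monkOp_mul_descentOp (hab : a ⋖ b) (j : Fin N) :
    monkOp j * descentOp a b = descentOp a b * monkOp (swap a b j) +
      (Pi.single a 1 - Pi.single b 1 : Fin N → ℤ) j • 1 := by
  rw [monkOp, monkOp, Finset.sum_mul, Finset.mul_sum, ← Equiv.sum_comp (swap a b) fun d =>
    descentOp a b * (coverOp (swap a b j) d - coverOp d (swap a b j))]
  simp only [coverOp_sub_coverOp_mul_descentOp hab, Finset.sum_add_distrib, Finset.sum_ite_eq',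
    Finset.mem_univ, if_true]

theorem monkOp_single_w0 (j : Fin N) : monkOp j (Pi.single (w0 N) 1) = 0 := by
  have hcov (a b : Fin N) : coverOp a b (Pi.single (w0 N) 1) = 0 := by
    rw [coverOp, partialMul_single, if_neg]
    exact fun h => h.apply_lt_apply.not_gt (Fin.rev_lt_rev.2 h.1)
  simp [monkOp, LinearMap.sum_apply, hcov]

theorem theta_leftPos_rightPos (j : Fin N) :
    theta (leftPos N j) j (rightPos N (j + 1)) = monkOp j := by
  rw [theta, monkOp, Finset.sum_sub_distrib]
  congr 1
  · refine Finset.sum_subset (Finset.subset_univ _) fun d _ hd => coverOp_eq_zero ?_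
    rw [mem_rightPos] at hd
    exact Fin.le_def.2 (by omega)
  · refine Finset.sum_subset (Finset.subset_univ _) fun d _ hd => coverOp_eq_zero ?_
    rw [mem_leftPos] at hd
    exact Fin.le_def.2 (by omega)

variable [NeZero N]

/-- The linear combination of Schubert polynomials with given coefficients. -/
noncomputable def schubertSum : (Perm (Fin N) → ℤ) →ₗ[ℤ] MvPolynomial (Fin N) ℤ :=
  Fintype.linearCombination ℤ (schubertPoly N)

theorem schubertSum_single (w : Perm (Fin N)) :
    schubertSum (Pi.single w 1) = schubertPoly N w := by
  rw [schubertSum, Fintype.linearCombination_apply_single, one_smul]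

theorem divDiffAt_schubertSum (hab : a ⋖ b) (f : Perm (Fin N) → ℤ) :
    divDiffAt a b (schubertSum f) = schubertSum (descentOp a b f) := by
  suffices h : divDiffAt a b ∘ₗ schubertSum = schubertSum ∘ₗ descentOp a b from
    LinearMap.congr_fun h f
  refine (Pi.basisFun ℤ _).ext fun w => ?_
  rw [Pi.basisFun_apply, LinearMap.comp_apply, LinearMap.comp_apply, schubertSum_single, descentOp,
    partialMul_single]
  split_ifs with hw
  · rw [divDiffAt_schubertPoly_of_gt hab hw, schubertSum_single]
  · rw [divDiffAt_schubertPoly_of_lt hab (lt_of_le_of_ne (not_lt.1 hw) (w.injective.ne hab.ne)),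
      map_zero]

theorem X_mul_schubertSum_sub_descentOp (hab : a ⋖ b) (j : Fin N) (f : Perm (Fin N) → ℤ) :
    X j * schubertSum (descentOp a b f) - schubertSum (monkOp j (descentOp a b f)) =
      divDiffAt a b (X (swap a b j) * schubertSum f - schubertSum (monkOp (swap a b j) f)) := by
  rw [← divDiffAt_schubertSum hab, ← Module.End.mul_apply, monkOp_mul_descentOp hab,
    X_mul_divDiffAt, LinearMap.add_apply, LinearMap.smul_apply, Module.End.one_apply, map_add,
    map_smul, Module.End.mul_apply, ← divDiffAt_schubertSum hab, map_sub]
  ring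

theorem X_mul_schubertPoly_sub_mem (j : Fin N) (w : Perm (Fin N)) :
    X j * schubertPoly N w - schubertSum (monkOp j (Pi.single w 1)) ∈ symIdeal N := by
  induction hn : N * N - len w using Nat.strong_induction_on generalizing w j with
  | _ n ih =>
  subst hn
  by_cases hw : ∀ a b, a ⋖ b → w b < w a
  · rw [eq_w0_of_forall_covBy_gt hw, monkOp_single_w0, map_zero, sub_zero, schubertPoly_w0]
    exact X_mul_staircase_mem j
  push Not at hw
  obtain ⟨a, b, hab, hle⟩ := hw
  have hdesc : (w * swap a b) b < (w * swap a b) a := by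
    simpa using lt_of_le_of_ne hle (w.injective.ne hab.ne)
  have hlen := len_eq_len_mul_swap_add_one_of_covBy hab hdesc
  have hmax := len_le (w := w * swap a b)
  have hsingle : Pi.single w 1 = descentOp a b (Pi.single (w * swap a b) 1) := by
    rw [descentOp, partialMul_single, if_pos hdesc, mul_assoc, swap_mul_self, mul_one]
  rw [mul_assoc, swap_mul_self, mul_one] at hlen
  rw [← schubertSum_single, hsingle, X_mul_schubertSum_sub_descentOp hab, schubertSum_single]
  exact divDiffAt_mem_symIdeal a b (ih _ (by omega) (swap a b j) _ rfl)

theorem mk_X_mul_schubertSum (j : Fin N) (f : Perm (Fin N) → ℤ) :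
    Ideal.Quotient.mk (symIdeal N) (X j * schubertSum f) =
      Ideal.Quotient.mk (symIdeal N) (schubertSum (monkOp j f)) := by
  suffices h : (Ideal.Quotient.mkₐ ℤ (symIdeal N)).toLinearMap ∘ₗ LinearMap.mulLeft ℤ (X j) ∘ₗ
      schubertSum = (Ideal.Quotient.mkₐ ℤ (symIdeal N)).toLinearMap ∘ₗ schubertSum ∘ₗ monkOp j from
    LinearMap.congr_fun h f
  refine (Pi.basisFun ℤ _).ext fun w => Ideal.Quotient.eq.2 ?_
  rw [Pi.basisFun_apply, LinearMap.comp_apply, LinearMap.comp_apply, LinearMap.mulLeft_apply,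
    schubertSum_single]
  exact X_mul_schubertPoly_sub_mem j w

end Monk

section Pieri

theorem esymm_cons {R : Type*} [CommSemiring R] (a : R) (s : Multiset R) (m : ℕ) :
    (a ::ₘ s).esymm (m + 1) = s.esymm (m + 1) + a * s.esymm m := by
  simp only [Multiset.esymm, Multiset.powersetCard_cons, Multiset.map_add, Multiset.sum_add,
    Multiset.map_map, Function.comp_def, Multiset.prod_cons, Multiset.sum_map_mul_left]

theorem ePoly_eq_esymm (N k m : ℕ) : ePoly N k m = ((leftPos N k).val.map X).esymm m :=
  (Finset.esymm_map_val X _ m).symm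

theorem ePoly_zero_right (N k : ℕ) : ePoly N k 0 = 1 := by
  simp [ePoly]

theorem ePoly_zero_left (N m : ℕ) : ePoly N 0 (m + 1) = 0 := by
  rw [ePoly, Finset.powersetCard_eq_empty.2 (by simp), Finset.sum_empty]

variable {N : ℕ}

theorem ePoly_succ (j : Fin N) (m : ℕ) :
    ePoly N (j + 1) (m + 1) = ePoly N j (m + 1) + X j * ePoly N j m := by
  have hj : j ∉ leftPos N j := by simp [mem_leftPos]
  simp only [ePoly_eq_esymm, leftPos_succ, Finset.insert_val_of_notMem hj, Multiset.map_cons,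
    esymm_cons]

variable [NeZero N]

theorem mk_ePoly_mul_schubertSum {k : ℕ} (hk : k ≤ N) (m : ℕ) (f : Perm (Fin N) → ℤ) :
    Ideal.Quotient.mk (symIdeal N) (ePoly N k m * schubertSum f) =
      Ideal.Quotient.mk (symIdeal N) (schubertSum (chainOp m (leftPos N k) (rightPos N k) f)) := by
  induction k generalizing m with
  | zero =>
    obtain _ | m := m
    · rw [ePoly_zero_right, chainOp_zero, one_mul, Module.End.one_apply]
    · have hempty : leftPos N 0 = ∅ := by simp [leftPos]
      rw [ePoly_zero_left, hempty, chainOp_empty_left, zero_mul, LinearMap.zero_apply, map_zero,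
        map_zero, map_zero]
  | succ k ih =>
    obtain _ | m := m
    · rw [ePoly_zero_right, chainOp_zero, one_mul, Module.End.one_apply]
    obtain ⟨j, rfl⟩ : ∃ j : Fin N, (j : ℕ) = k := ⟨⟨k, hk⟩, rfl⟩
    have hrec := chainOp_insert_left (m := m) (I := leftPos N j) (J := rightPos N (j + 1)) (j := j)
      (fun a ha => mem_leftPos.1 ha) (fun b hb => mem_rightPos.1 hb)
    rw [← leftPos_succ, ← rightPos_eq_insert, theta_leftPos_rightPos] at hrec
    rw [hrec, LinearMap.add_apply, Module.End.mul_apply, map_add, map_add, ← mk_X_mul_schubertSum,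
      ePoly_succ, add_mul, map_add, ih (by omega), mul_assoc, map_mul _ (X j), ih (by omega),
      ← map_mul]

theorem mk_schubertSum_chainOp_single {m : ℕ} {I J : Finset (Fin N)} (w : Perm (Fin N)) :
    Ideal.Quotient.mk (symIdeal N) (schubertSum (chainOp m I J (Pi.single w 1))) =
      ∑ w' with PieriChain J w I m w', SS N w' := by
  rw [schubertSum, Fintype.linearCombination_apply, map_sum, Finset.sum_filter]
  refine Finset.sum_congr rfl fun w' _ => ?_
  have hcoeff : chainOp m I J (Pi.single w 1) w' = if PieriChain J w I m w' then 1 else 0 := by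
    rw [chainOp_apply, Finset.sum_eq_single w]
    · simp
    · intro v _ hv
      simp [hv]
    · simp
  rw [hcoeff, ite_smul, one_smul, zero_smul, SS]
  split_ifs <;> simp

end Pieri

/-- Pieri's rule for elementary symmetric polynomials:
`𝔖_w · e_m(x₁,…,x_k) = Σ_{w →_{c[k,m]} w'} 𝔖_{w'}` in `Hₙ` (here the paper's `n` is `n+1`). -/
theorem pieri_elementary (n k m : ℕ) (hm : 1 ≤ m) (hmk : m ≤ k) (hkn : k ≤ n + 1)
    (w : Equiv.Perm (Fin (n + 1))) :
    SS (n + 1) w * Ideal.Quotient.mk (symIdeal (n + 1)) (ePoly (n + 1) k m) =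
      ∑ w' ∈ Finset.univ.filter (RelC (n + 1) k m w), SS (n + 1) w' := by
  have hrel : RelC (n + 1) k m w = PieriChain (rightPos _ k) w (leftPos _ k) m :=
    funext fun _ => propext (relC_iff_pieriChain hkn)
  rw [hrel, ← mk_schubertSum_chainOp_single, ← mk_ePoly_mul_schubertSum hkn, schubertSum_single,
    mul_comm, map_mul, SS]

end SchubertPieri
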